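/- arXiv:2301.11906 — 9 statements merged into one kernel-verified Lean document; each statement's English description precedes it below -/
import Mathlib

section
/- Let u ≥ 1, let {I_ν}_ν be a finite or countable family of pairwise disjoint order-convex subsets (intervals) of ℕ, and let (a_ν) be complex coefficients with Σ_ν |a_ν|^u < ∞. Then the sequence g : ℕ → ℂ defined by g = Σ_ν a_ν 1_{I_ν} satisfies 𝒱_u(g) ≤ 2 (Σ_ν |a_ν|^u)^{1/u}. -/
open scoped ENNReal

/-- The `u`-variation `𝒱_u(m)` of a sequence `m : ℕ → ℂ`, as a value in `[0,∞]`: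
the supremum over all finite increasing strings `j 0 < j 1 < ⋯ < j N` of
`(∑_{n=1}^N |m(j n) - m(j (n-1))|^u)^(1/u)`. -/
noncomputable def eVar (u : ℝ) (m : ℕ → ℂ) : ℝ≥0∞ :=
  ⨆ (N : ℕ) (j : Fin (N + 1) → ℕ) (_ : StrictMono j),
    (∑ i : Fin N, (ENNReal.ofReal ‖m (j i.succ) - m (j i.castSucc)‖) ^ u) ^ (1 / u)

open scoped Classical in
theorem haar_aux_count {N : ℕ} (u : ℝ) (hu : 1 ≤ u) (P : Fin N → ℕ → Prop)
    (hP : ∀ i i' ν, P i ν → P i' ν → i = i') (w : ℕ → ℝ≥0∞) (F : Fin N → ℝ≥0∞)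
    (hF : ∀ i, F i = 0 ∨ ∃ ν, P i ν ∧ F i = w ν) :
    ∑ i, F i ^ u ≤ ∑' ν, w ν ^ u := by
  have h1 : ∀ i, F i ^ u ≤ ∑' ν, if P i ν then w ν ^ u else 0 := by
    intro i
    rcases hF i with h | ⟨ν, h, h'⟩
    · rw [h, ENNReal.zero_rpow_of_pos (by linarith)]
      exact zero_le
    · rw [h']
      refine le_trans ?_ (ENNReal.le_tsum ν)
      rw [if_pos h]
  refine (Finset.sum_le_sum fun i _ => h1 i).trans ?_
  rw [← Summable.tsum_finsetSum (fun i _ => ENNReal.summable)]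
  refine ENNReal.tsum_le_tsum fun ν => ?_
  by_cases h : ∃ i, P i ν
  · obtain ⟨i, hi⟩ := h
    rw [Finset.sum_eq_single i]
    · rw [if_pos hi]
    · intro b _ hb
      exact if_neg fun hb' => hb (hP _ _ ν hb' hi)
    · intro h; exact absurd (Finset.mem_univ _) h
  · rw [Finset.sum_eq_zero]
    · exact zero_le
    · intro i _
      exact if_neg fun hi => h ⟨i, hi⟩

/-- If `u ≥ 1`, `{I ν}` is a countable family of pairwise disjoint order-convex
subsets (intervals) of `ℕ` and `a` has `Σ_ν |a ν|^u < ∞`, then the sequence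
`g = Σ_ν a_ν 1_{I ν}` satisfies `𝒱_u(g) ≤ 2 (Σ_ν |a ν|^u)^(1/u)`. -/
theorem haar_stmt0 (u : ℝ) (hu : 1 ≤ u) (I : ℕ → Set ℕ)
    (hconv : ∀ ν, (I ν).OrdConnected)
    (hdisj : Pairwise (Function.onFun Disjoint I))
    (a : ℕ → ℂ) (ha : Summable fun ν => ‖a ν‖ ^ u) :
    eVar u (fun n => ∑' ν : ℕ, (I ν).indicator (fun _ => a ν) n)
      ≤ ENNReal.ofReal (2 * (∑' ν : ℕ, ‖a ν‖ ^ u) ^ (1 / u)) := by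
  classical
  have hu0 : 0 < u := by linarith
  have huniq : ∀ n ν μ, n ∈ I ν → n ∈ I μ → ν = μ := by
    intro n ν μ h1 h2
    by_contra hne
    exact Set.disjoint_left.mp (hdisj hne) h1 h2
  have hg1 : ∀ n ν, n ∈ I ν → ∑' ν : ℕ, (I ν).indicator (fun _ => a ν) n = a ν := by
    intro n ν h
    rw [tsum_eq_single ν]
    · simp [h]
    · intro μ hμ
      exact Set.indicator_of_notMem (fun h' => hμ (huniq n μ ν h' h)) _
  have hg0 : ∀ n, (∀ ν, n ∉ I ν) → ∑' ν : ℕ, (I ν).indicator (fun _ => a ν) n = 0 := by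
    intro n h
    simp [h]
  have hR : ENNReal.ofReal (2 * (∑' ν : ℕ, ‖a ν‖ ^ u) ^ (1 / u))
      = (∑' ν, ENNReal.ofReal ‖a ν‖ ^ u) ^ (1 / u)
        + (∑' ν, ENNReal.ofReal ‖a ν‖ ^ u) ^ (1 / u) := by
    have : ∑' ν, ENNReal.ofReal ‖a ν‖ ^ u = ENNReal.ofReal (∑' ν : ℕ, ‖a ν‖ ^ u) := by
      rw [ENNReal.ofReal_tsum_of_nonneg (fun ν => by positivity) ha]
      exact tsum_congr fun ν => ENNReal.ofReal_rpow_of_nonneg (norm_nonneg _) hu0.le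
    have h0 : 0 ≤ ∑' ν : ℕ, ‖a ν‖ ^ u := tsum_nonneg fun ν => by positivity
    rw [this, ENNReal.ofReal_rpow_of_nonneg h0 (by positivity), two_mul,
      ENNReal.ofReal_add (by positivity) (by positivity)]
  rw [hR]
  unfold eVar
  refine iSup_le fun N => iSup_le fun j => iSup_le fun hj => ?_
  beta_reduce
  set g : ℕ → ℂ := fun n => ∑' ν : ℕ, (I ν).indicator (fun _ => a ν) n with hg
  change ∀ n ν, n ∈ I ν → g n = a ν at hg1
  change ∀ n, (∀ ν, n ∉ I ν) → g n = 0 at hg0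
  let P : Fin N → ℕ → Prop := fun i ν => j i.succ ∈ I ν ∧ j i.castSucc ∉ I ν
  let Q : Fin N → ℕ → Prop := fun i ν => j i.castSucc ∈ I ν ∧ j i.succ ∉ I ν
  let A : Fin N → ℝ≥0∞ := fun i => if ∃ ν, P i ν then ENNReal.ofReal ‖g (j i.succ)‖ else 0
  let B : Fin N → ℝ≥0∞ := fun i => if ∃ ν, Q i ν then ENNReal.ofReal ‖g (j i.castSucc)‖ else 0
  have hlt : ∀ i : Fin N, j i.castSucc < j i.succ := fun i => hj (Fin.castSucc_lt_succ)
  have hle : ∀ i i' : Fin N, i < i' → j i.succ ≤ j i'.castSucc := fun i i' h =>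
    hj.monotone (by rw [Fin.le_def]; simpa using h)
  have hPlt : ∀ i i' ν, P i ν → P i' ν → ¬ i < i' := by
    intro i i' ν h h' hl
    exact h'.2 ((hconv ν).out h.1 h'.1 ⟨hle _ _ hl, (hlt i').le⟩)
  have hQlt : ∀ i i' ν, Q i ν → Q i' ν → ¬ i < i' := by
    intro i i' ν h h' hl
    exact h.2 ((hconv ν).out h.1 h'.1 ⟨(hlt i).le, hle _ _ hl⟩)
  have hA : ∑ i, A i ^ u ≤ ∑' ν, ENNReal.ofReal ‖a ν‖ ^ u := by
    refine haar_aux_count u hu P (fun i i' ν h h' => le_antisymm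
      (not_lt.mp (hPlt _ _ ν h' h)) (not_lt.mp (hPlt _ _ ν h h'))) _ A fun i => ?_
    by_cases h : ∃ ν, P i ν
    · right
      obtain ⟨ν, hν⟩ := h
      refine ⟨ν, hν, ?_⟩
      simp only [A]
      rw [if_pos ⟨ν, hν⟩, hg1 _ ν hν.1]
    · left; exact if_neg h
  have hB : ∑ i, B i ^ u ≤ ∑' ν, ENNReal.ofReal ‖a ν‖ ^ u := by
    refine haar_aux_count u hu Q (fun i i' ν h h' => le_antisymm
      (not_lt.mp (hQlt _ _ ν h' h)) (not_lt.mp (hQlt _ _ ν h h'))) _ B fun i => ?_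
    by_cases h : ∃ ν, Q i ν
    · right
      obtain ⟨ν, hν⟩ := h
      refine ⟨ν, hν, ?_⟩
      simp only [B]
      rw [if_pos ⟨ν, hν⟩, hg1 _ ν hν.1]
    · left; exact if_neg h
  have hAB : ∀ i : Fin N,
      ENNReal.ofReal ‖g (j i.succ) - g (j i.castSucc)‖ ≤ A i + B i := by
    intro i
    by_cases hs : ∃ ν, j i.succ ∈ I ν ∧ j i.castSucc ∈ I ν
    · obtain ⟨ν, h1, h2⟩ := hs
      rw [hg1 _ ν h1, hg1 _ ν h2]
      simp
    · have h1 : A i = ENNReal.ofReal ‖g (j i.succ)‖ := by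
        by_cases h : ∃ ν, j i.succ ∈ I ν
        · obtain ⟨ν, hν⟩ := h
          exact if_pos ⟨ν, hν, fun h' => hs ⟨ν, hν, h'⟩⟩
        · push Not at h
          rw [hg0 _ h]
          simp only [A]
          rw [if_neg (fun ⟨ν, hν⟩ => h ν hν.1)]
          simp
      have h2 : B i = ENNReal.ofReal ‖g (j i.castSucc)‖ := by
        by_cases h : ∃ ν, j i.castSucc ∈ I ν
        · obtain ⟨ν, hν⟩ := h
          exact if_pos ⟨ν, hν, fun h' => hs ⟨ν, h', hν⟩⟩
        · push Not at h
          rw [hg0 _ h]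
          simp only [B]
          rw [if_neg (fun ⟨ν, hν⟩ => h ν hν.1)]
          simp
      rw [h1, h2, ← ENNReal.ofReal_add (norm_nonneg _) (norm_nonneg _)]
      exact ENNReal.ofReal_le_ofReal (norm_sub_le _ _)
  calc _ ≤ (∑ i, (A i + B i) ^ u) ^ (1 / u) := by
        refine ENNReal.rpow_le_rpow ?_ (by positivity)
        exact Finset.sum_le_sum fun i _ => ENNReal.rpow_le_rpow (hAB i) hu0.le
    _ ≤ (∑ i, A i ^ u) ^ (1 / u) + (∑ i, B i ^ u) ^ (1 / u) :=
        ENNReal.Lp_add_le _ _ _ hu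
    _ ≤ _ := add_le_add (ENNReal.rpow_le_rpow hA (by positivity))
        (ENNReal.rpow_le_rpow hB (by positivity))
end

section
/- For every u ≥ 1 and every ε > 0 there is a constant C = C(u, ε) such that every sequence m : ℕ → ℂ with ‖m‖_{V_u} < ∞ belongs to R_{u+ε} with ‖m‖_{R_{u+ε}} ≤ C ‖m‖_{V_u}; in particular the embedding V_u ⊆ R_{u+ε} is continuous. -/
open scoped ENNReal

/-- The `V_u` norm `‖m‖_{V_u} = sup_j |m j| + 𝒱_u(m)`, as a value in `[0,∞]`. -/
noncomputable def eVnorm (u : ℝ) (m : ℕ → ℂ) : ℝ≥0∞ :=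
  (⨆ j : ℕ, ENNReal.ofReal ‖m j‖) + eVar u m

/-- `g ∈ r_u`: `g = Σ_ν a_ν 1_{I_ν}` for a countable family of pairwise disjoint
order-convex subsets (intervals) `I_ν` of `ℕ` and coefficients with
`(Σ_ν |a_ν|^u)^(1/u) ≤ 1`. -/
def memru (u : ℝ) (g : ℕ → ℂ) : Prop :=
  ∃ (I : ℕ → Set ℕ) (a : ℕ → ℂ),
    (∀ ν, (I ν).OrdConnected) ∧ Pairwise (Function.onFun Disjoint I) ∧
    Summable (fun ν => ‖a ν‖ ^ u) ∧ (∑' ν : ℕ, ‖a ν‖ ^ u) ^ (1 / u) ≤ 1 ∧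
    ∀ n, g n = ∑' ν : ℕ, (I ν).indicator (fun _ => a ν) n

/-- An `R_u`-representation of `m`: `m = Σ_l c_l g_l` pointwise, with `g_l ∈ r_u`
and `Σ_l |c_l| < ∞`. -/
def RuRep (u : ℝ) (m : ℕ → ℂ) (c : ℕ → ℂ) (g : ℕ → ℕ → ℂ) : Prop :=
  (∀ l, memru u (g l)) ∧ Summable (fun l => ‖c l‖) ∧
  ∀ n, HasSum (fun l => c l * g l n) (m n)

/-- `‖m‖_{R_u}`: the infimum of `Σ_l |c_l|` over all `R_u`-representations of `m`,
as a value in `[0,∞]` (equal to `∞` if no representation exists). -/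
noncomputable def RuNorm (u : ℝ) (m : ℕ → ℂ) : ℝ≥0∞ :=
  ⨅ (c : ℕ → ℂ) (g : ℕ → ℕ → ℂ) (_ : RuRep u m c g), ENNReal.ofReal (∑' l : ℕ, ‖c l‖)



/-- A bounded function that factors through a monotone map with few values lies in `r_v`. -/
lemma memru_of_factor (v : ℝ) (hv : 1 ≤ v) (g : ℕ → ℂ) (F : ℕ → ℕ) (hF : Monotone F) (N : ℕ)
    (hN : ∀ n, F n < N) (hg : ∀ n n', F n = F n' → g n = g n') (δ : ℝ)
    (hgδ : ∀ n, ‖g n‖ ≤ δ) (hNδ : (N : ℝ) * δ ^ v ≤ 1) : memru v g := by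
  classical
  have hδ : 0 ≤ δ := (norm_nonneg _).trans (hgδ 0)
  have hv0 : 0 < v := by linarith
  let a : ℕ → ℂ := fun i => if h : ∃ n, F n = i then g h.choose else 0
  have ha : ∀ n, a (F n) = g n := by
    intro n
    have h : ∃ k, F k = F n := ⟨n, rfl⟩
    simp only [a, dif_pos h]
    exact hg _ _ h.choose_spec
  have haδ : ∀ i, ‖a i‖ ≤ δ := by
    intro i
    by_cases h : ∃ n, F n = i
    · simp only [a, dif_pos h]; exact hgδ _
    · simp only [a, dif_neg h]; simpa using hδ
  have ha0 : ∀ i, i ∉ Finset.range N → ‖a i‖ ^ v = 0 := by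
    intro i hi
    have h : ¬ ∃ n, F n = i := by
      rintro ⟨n, rfl⟩
      exact hi (Finset.mem_range.2 (hN n))
    simp only [a, dif_neg h, norm_zero]
    exact Real.zero_rpow hv0.ne'
  refine ⟨fun i => {n | F n = i}, a, ?_, ?_, ?_, ?_, ?_⟩
  · intro i
    constructor
    intro x hx y hy z hz
    have h1 := hF hz.1
    have h2 := hF hz.2
    simp only [Set.mem_ofPred_eq] at *
    omega
  · intro i j hij
    simp only [Function.onFun]
    rw [Set.disjoint_left]
    intro x hx hy
    exact hij (hx.symm.trans hy)
  · exact summable_of_ne_finset_zero (s := Finset.range N) ha0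
  · rw [tsum_eq_sum (s := Finset.range N) (fun i hi => ha0 i hi)]
    apply Real.rpow_le_one
    · exact Finset.sum_nonneg fun i _ => Real.rpow_nonneg (norm_nonneg _) _
    · calc ∑ i ∈ Finset.range N, ‖a i‖ ^ v ≤ ∑ i ∈ Finset.range N, δ ^ v :=
            Finset.sum_le_sum fun i _ => Real.rpow_le_rpow (norm_nonneg _) (haδ i) hv0.le
        _ = N * δ ^ v := by simp
        _ ≤ 1 := hNδ
    · positivity
  · intro n
    rw [tsum_eq_single (F n)]
    · simp [ha]
    · intro i hi
      apply Set.indicator_of_notMem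
      exact fun h => hi h.symm

/-- The control function. -/
lemma exists_control (u : ℝ) (hu : 1 ≤ u) (m : ℕ → ℂ) (A : ℝ) (hA : 0 ≤ A)
    (h : eVar u m ≤ ENNReal.ofReal A) :
    ∃ w : ℕ → ℝ, Monotone w ∧ (∀ n, 0 ≤ w n) ∧ (∀ n, w n ≤ 1) ∧
      ∀ k n, k ≤ n → ‖m n - m k‖ ^ u ≤ A ^ u * (w n - w k) := by
  have hu0 : 0 < u := by linarith
  let T : (N : ℕ) → (Fin (N + 1) → ℕ) → ℝ := fun N j =>
    ∑ i : Fin N, ‖m (j i.succ) - m (j i.castSucc)‖ ^ u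
  have hT0 : ∀ N j, 0 ≤ T N j := fun N j =>
    Finset.sum_nonneg fun i _ => Real.rpow_nonneg (norm_nonneg _) _
  have hT : ∀ N j, StrictMono j → T N j ≤ A ^ u := by
    intro N j hj
    have h1 : (∑ i : Fin N, (ENNReal.ofReal ‖m (j i.succ) - m (j i.castSucc)‖) ^ u) ^ (1 / u)
        ≤ ENNReal.ofReal A := by
      refine le_trans ?_ h
      unfold eVar
      exact le_iSup_of_le N (le_iSup_of_le j (le_iSup_of_le hj le_rfl))
    have h2 : (∑ i : Fin N, (ENNReal.ofReal ‖m (j i.succ) - m (j i.castSucc)‖) ^ u)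
        = ENNReal.ofReal (T N j) := by
      rw [ENNReal.ofReal_sum_of_nonneg fun i _ => Real.rpow_nonneg (norm_nonneg _) _]
      refine Finset.sum_congr rfl fun i _ => ?_
      rw [ENNReal.ofReal_rpow_of_nonneg (norm_nonneg _) hu0.le]
    rw [h2, ENNReal.ofReal_rpow_of_nonneg (hT0 _ _) (by positivity),
      ENNReal.ofReal_le_ofReal_iff hA] at h1
    have h3 := Real.rpow_le_rpow (Real.rpow_nonneg (hT0 _ _) _) h1 hu0.le
    rwa [← Real.rpow_mul (hT0 _ _), one_div, inv_mul_cancel₀ hu0.ne', Real.rpow_one] at h3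
  let S : ℕ → Set ℝ := fun n => {s | ∃ N j, StrictMono j ∧ j (Fin.last N) = n ∧ T N j = s}
  have hSb : ∀ n, BddAbove (S n) := by
    intro n
    refine ⟨A ^ u, ?_⟩
    rintro s ⟨N, j, hj, -, rfl⟩
    exact hT N j hj
  have hS0 : ∀ n, (0 : ℝ) ∈ S n := by
    intro n
    refine ⟨0, fun _ => n, fun a b hab => by omega, rfl, ?_⟩
    simp [T]
  have hstep : ∀ k n, k < n → ∀ s ∈ S k, s + ‖m n - m k‖ ^ u ∈ S n := by
    rintro k n hkn s ⟨N, j, hj, hjk, rfl⟩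
    refine ⟨N + 1, Fin.snoc j n, ?_, by simp, ?_⟩
    · rw [Fin.strictMono_iff_lt_succ]
      intro i
      refine Fin.lastCases ?_ (fun i => ?_) i
      · rw [Fin.succ_last, Fin.snoc_last, Fin.snoc_castSucc, hjk]; exact hkn
      · rw [Fin.succ_castSucc, Fin.snoc_castSucc, Fin.snoc_castSucc]
        exact hj (Fin.castSucc_lt_succ)
    · simp only [T]
      rw [Fin.sum_univ_castSucc]
      congr 1
      · refine Finset.sum_congr rfl fun i _ => ?_
        rw [Fin.succ_castSucc, Fin.snoc_castSucc, Fin.snoc_castSucc]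
      · rw [Fin.succ_last, Fin.snoc_last, Fin.snoc_castSucc, hjk]
  let W : ℕ → ℝ := fun n => sSup (S n)
  have hW : ∀ k n, k ≤ n → W k + ‖m n - m k‖ ^ u ≤ W n := by
    intro k n hkn
    rcases hkn.eq_or_lt with rfl | hlt
    · simp [Real.zero_rpow hu0.ne']
    · rw [← le_sub_iff_add_le]
      refine csSup_le ⟨0, hS0 k⟩ fun s hs => ?_
      rw [le_sub_iff_add_le]
      exact le_csSup (hSb n) (hstep k n hlt s hs)
  have hW0 : ∀ n, 0 ≤ W n := fun n => le_csSup (hSb n) (hS0 n)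
  have hW1 : ∀ n, W n ≤ A ^ u := by
    intro n
    refine csSup_le ⟨0, hS0 n⟩ ?_
    rintro s ⟨N, j, hj, -, rfl⟩
    exact hT N j hj
  have hAu : 0 ≤ A ^ u := Real.rpow_nonneg hA _
  have hWm : Monotone W := fun k n hkn => by
    have := hW k n hkn
    have h2 : 0 ≤ ‖m n - m k‖ ^ u := Real.rpow_nonneg (norm_nonneg _) _
    linarith
  refine ⟨fun n => W n / A ^ u, ?_, ?_, ?_, ?_⟩
  · intro k n hkn
    exact div_le_div_of_nonneg_right (hWm hkn) hAu
  · intro n; exact div_nonneg (hW0 n) hAu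
  · intro n; exact div_le_one_of_le₀ (hW1 n) hAu
  · intro k n hkn
    have := hW k n hkn
    rcases hAu.eq_or_lt with h0 | hpos
    · have h1 := hW1 n
      have h2 := hW0 k
      rw [← h0] at h1 ⊢
      linarith
    · have : A ^ u * (W n / A ^ u - W k / A ^ u) = W n - W k := by field_simp
      rw [this]; linarith

lemma main_rep (u ε : ℝ) (hu : 1 ≤ u) (hε : 0 < ε) (m : ℕ → ℂ) (A : ℝ) (hA : 0 ≤ A)
    (hm : ∀ n, ‖m n‖ ≤ A) (h : eVar u m ≤ ENNReal.ofReal A) :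
    ∃ g, RuRep (u + ε) m
      (fun l => ((A * 4 * ((2 : ℝ) ^ (1 / (u + ε) - 1 / u)) ^ l : ℝ) : ℂ)) g := by
  obtain ⟨w, hwm, hw0, hw1, hw⟩ := exists_control u hu m A hA h
  have hu0 : 0 < u := by linarith
  set v := u + ε with hv
  have hv1 : 1 ≤ v := by linarith
  have hv0 : 0 < v := by linarith
  set q : ℝ := (2 : ℝ) ^ (1 / v - 1 / u) with hq
  have hq0 : 0 < q := by positivity
  have hq1 : q < 1 := by
    apply Real.rpow_lt_one_of_one_lt_of_neg one_lt_two
    have : 1 / v < 1 / u := one_div_lt_one_div_of_lt hu0 (by linarith)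
    linarith
  set ρ : ℝ := (2 : ℝ) ^ (-(1 / u)) with hρ
  have hρ0 : 0 < ρ := by positivity
  have hρ1 : ρ < 1 := by
    apply Real.rpow_lt_one_of_one_lt_of_neg one_lt_two
    have : 0 < 1 / u := by positivity
    linarith
  set σ : ℝ := (2 : ℝ) ^ (-(1 / v)) with hσ
  have hσ0 : 0 < σ := by positivity
  have hqσ : q * σ = ρ := by
    rw [hq, hσ, hρ, ← Real.rpow_add two_pos]; congr 1; ring
  have hρu : ρ ^ u = 1 / 2 := by
    rw [hρ, ← Real.rpow_mul two_pos.le, neg_mul, one_div, inv_mul_cancel₀ hu0.ne',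
      Real.rpow_neg_one]; norm_num
  have hσv : σ ^ v = 1 / 2 := by
    rw [hσ, ← Real.rpow_mul two_pos.le, neg_mul, one_div, inv_mul_cancel₀ hv0.ne',
      Real.rpow_neg_one]; norm_num
  have hρ2 : 1 ≤ 2 * ρ := by
    have h1 : (2 : ℝ) ^ (-1 : ℝ) ≤ ρ := by
      apply Real.rpow_le_rpow_of_exponent_le one_le_two
      have : 1 / u ≤ 1 := by rw [div_le_one hu0]; exact hu
      linarith
    rw [Real.rpow_neg_one] at h1
    linarith
  -- the level function
  let F : ℕ → ℕ → ℕ := fun l n => ⌊(2 : ℝ) ^ l * w n⌋₊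
  have hFm : ∀ l, Monotone (F l) := fun l k n hkn =>
    Nat.floor_mono (mul_le_mul_of_nonneg_left (hwm hkn) (by positivity))
  have hFN : ∀ l n, F l n < 2 ^ (l + 1) := by
    intro l n
    have h1 : F l n ≤ 2 ^ l := by
      apply Nat.floor_le_of_le
      push_cast
      exact mul_le_of_le_one_right (by positivity) (hw1 n)
    have : (2 : ℕ) ^ l < 2 ^ (l + 1) := Nat.pow_lt_pow_right (by norm_num) (by omega)
    omega
  have hFs : ∀ l n, F l n = F (l + 1) n / 2 := by
    intro l n
    simp only [F]
    have := Nat.floor_div_natCast ((2 : ℝ) ^ (l + 1) * w n) 2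
    rw [← this]
    congr 1
    push_cast
    ring
  have hclose : ∀ l k n, F l k = F l n → ‖m n - m k‖ ≤ A * ρ ^ l := by
    intro l
    have key : ∀ k n, k ≤ n → F l k = F l n → ‖m n - m k‖ ≤ A * ρ ^ l := by
      intro k n hkn hF
      have h2l : (0 : ℝ) < 2 ^ l := by positivity
      have h1 : (2 : ℝ) ^ l * w n < F l n + 1 := Nat.lt_floor_add_one _
      have h2 : (F l k : ℝ) ≤ 2 ^ l * w k := Nat.floor_le (mul_nonneg h2l.le (hw0 k))
      rw [hF] at h2
      have h3 : w n - w k ≤ (1 / 2) ^ l := by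
        rw [one_div, inv_pow, ← one_div, le_div_iff₀ h2l]
        linarith
      have h4 : ‖m n - m k‖ ^ u ≤ (A * ρ ^ l) ^ u := by
        rw [Real.mul_rpow hA (by positivity), ← Real.rpow_natCast, ← Real.rpow_mul hρ0.le,
          mul_comm (l : ℝ) u, Real.rpow_mul hρ0.le, hρu, Real.rpow_natCast]
        exact (hw k n hkn).trans
          (mul_le_mul_of_nonneg_left h3 (Real.rpow_nonneg hA _))
      exact (Real.rpow_le_rpow_iff (norm_nonneg _) (by positivity) hu0).1 h4
    intro k n hF
    rcases le_total k n with hkn | hkn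
    · exact key k n hkn hF
    · rw [norm_sub_rev]; exact key n k hkn hF.symm
  let p : ℕ → ℕ → ℕ := fun l n => sInf {n' | F l n' = F l n}
  have hp : ∀ l n, F l (p l n) = F l n := fun l n =>
    Nat.sInf_mem (s := {n' | F l n' = F l n}) ⟨n, rfl⟩
  have hpc : ∀ l n n', F l n = F l n' → p l n = p l n' := by
    intro l n n' hF
    simp only [p, hF]
  let Q : ℕ → ℕ → ℂ := fun l n => Nat.casesOn l 0 (fun l => m (p l n))
  have hQ0 : ∀ n, Q 0 n = 0 := fun n => rfl
  have hQs : ∀ l n, Q (l + 1) n = m (p l n) := fun l n => rfl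
  have hh : ∀ l n, ‖Q (l + 1) n - Q l n‖ ≤ 2 * A * ρ ^ l := by
    intro l n
    cases l with
    | zero =>
      rw [hQs, hQ0, sub_zero, pow_zero]
      linarith [hm (p 0 n)]
    | succ l =>
      rw [hQs, hQs]
      have h1 : F l (p l n) = F l (p (l + 1) n) := by
        rw [hp, hFs l (p (l + 1) n), hp, ← hFs]
      refine (hclose l _ _ h1).trans ?_
      rw [pow_succ]
      have : 0 ≤ A * ρ ^ l := by positivity
      nlinarith
  have hhc : ∀ l n n', F l n = F l n' → Q (l + 1) n - Q l n = Q (l + 1) n' - Q l n' := by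
    intro l n n' hF
    cases l with
    | zero => rw [hQs, hQs, hQ0, hQ0, hpc _ _ _ hF]
    | succ l =>
      have h1 : F l n = F l n' := by rw [hFs l n, hFs l n', hF]
      rw [hQs, hQs, hQs, hQs, hpc _ _ _ hF, hpc _ _ _ h1]
  let c : ℕ → ℝ := fun l => A * 4 * q ^ l
  have hc0 : ∀ l, 0 ≤ c l := fun l => by positivity
  have hcs : Summable c := (summable_geometric_of_lt_one hq0.le hq1).mul_left _
  have hcg : ∀ l n, (c l : ℂ) * ((Q (l + 1) n - Q l n) / (c l : ℂ)) = Q (l + 1) n - Q l n := by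
    intro l n
    by_cases hc : c l = 0
    · have hA0 : A = 0 := by
        by_contra hne
        have : 0 < A := lt_of_le_of_ne hA (Ne.symm hne)
        have : 0 < c l := by positivity
        linarith
      have := hh l n
      rw [hA0] at this
      have h0 : Q (l + 1) n - Q l n = 0 := by
        rw [← norm_le_zero_iff]; simpa using this
      rw [h0]; simp
    · have : (c l : ℂ) ≠ 0 := by exact_mod_cast hc
      field_simp
  refine ⟨fun l n => (Q (l + 1) n - Q l n) / (c l : ℂ), ?_, ?_, ?_⟩
  · intro l
    refine memru_of_factor v hv1 _ (F l) (hFm l) (2 ^ (l + 1)) (hFN l) ?_ (σ ^ l / 2) ?_ ?_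
    · intro n n' hF
      simp only [hhc l n n' hF]
    · intro n
      rw [norm_div, Complex.norm_real, Real.norm_of_nonneg (hc0 l)]
      apply div_le_of_le_mul₀ (hc0 l) (by positivity)
      refine (hh l n).trans (le_of_eq ?_)
      simp only [c]
      rw [← hqσ, mul_pow]; ring
    · rw [Real.div_rpow (by positivity) two_pos.le, ← Real.rpow_natCast σ, ← Real.rpow_mul hσ0.le,
        mul_comm (l : ℝ) v, Real.rpow_mul hσ0.le, hσv, Real.rpow_natCast]
      have h2 : (2 : ℝ) ≤ 2 ^ v := by
        simpa using Real.rpow_le_rpow_of_exponent_le one_le_two hv1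
      have : ((2 ^ (l + 1) : ℕ) : ℝ) * ((1 / 2) ^ l / 2 ^ v) = 2 / 2 ^ v := by
        push_cast
        rw [pow_succ, one_div, inv_pow]
        field_simp
      rw [this]
      exact div_le_one_of_le₀ h2 (by positivity)
  · have : (fun l => ‖((A * 4 * q ^ l : ℝ) : ℂ)‖) = c := by
      funext l
      rw [Complex.norm_real, Real.norm_of_nonneg (hc0 l)]
    rw [this]
    exact hcs
  · intro n
    have he : (fun l => ((A * 4 * q ^ l : ℝ) : ℂ) * ((Q (l + 1) n - Q l n) / (c l : ℂ)))
        = fun l => Q (l + 1) n - Q l n := by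
      funext l; exact hcg l n
    rw [he]
    have hs : Summable fun l => Q (l + 1) n - Q l n :=
      Summable.of_norm_bounded
        ((summable_geometric_of_lt_one hρ0.le hρ1).mul_left (2 * A)) (fun l => hh l n)
    rw [hs.hasSum_iff_tendsto_nat]
    have he2 : (fun L => ∑ l ∈ Finset.range L, (Q (l + 1) n - Q l n)) = fun L => Q L n := by
      funext L
      rw [Finset.sum_range_sub (fun l => Q l n), hQ0, sub_zero]
    rw [he2, ← Filter.tendsto_add_atTop_iff_nat 1, tendsto_iff_norm_sub_tendsto_zero]
    have ht : Filter.Tendsto (fun l => A * ρ ^ l) Filter.atTop (nhds 0) := by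
      simpa using (tendsto_pow_atTop_nhds_zero_of_lt_one hρ0.le hρ1).const_mul A
    exact squeeze_zero (fun _ => norm_nonneg _) (fun l => hclose l _ _ (hp l n).symm) ht

/-- For every `u ≥ 1` and `ε > 0` there is `C = C(u,ε) > 0` such that every
`m : ℕ → ℂ` with `‖m‖_{V_u} < ∞` belongs to `R_{u+ε}` with
`‖m‖_{R_{u+ε}} ≤ C ‖m‖_{V_u}`; in particular `V_u ⊆ R_{u+ε}` continuously. -/
theorem haar_stmt2 (u ε : ℝ) (hu : 1 ≤ u) (hε : 0 < ε) :
    ∃ C : ℝ, 0 < C ∧ ∀ m : ℕ → ℂ, eVnorm u m < ∞ →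
      (∃ c g, RuRep (u + ε) m c g) ∧
      RuNorm (u + ε) m ≤ ENNReal.ofReal C * eVnorm u m := by
  have hu0 : 0 < u := by linarith
  set q : ℝ := (2 : ℝ) ^ (1 / (u + ε) - 1 / u) with hq
  have hq0 : 0 < q := by positivity
  have hq1 : q < 1 := by
    apply Real.rpow_lt_one_of_one_lt_of_neg one_lt_two
    have : 1 / (u + ε) < 1 / u := one_div_lt_one_div_of_lt hu0 (by linarith)
    linarith
  have h1q : 0 < 1 - q := by linarith
  refine ⟨4 * (1 - q)⁻¹, by positivity, fun m hm => ?_⟩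
  set A : ℝ := (eVnorm u m).toReal with hAdef
  have hA : 0 ≤ A := ENNReal.toReal_nonneg
  have hAe : ENNReal.ofReal A = eVnorm u m := ENNReal.ofReal_toReal hm.ne
  have hmn : ∀ n, ‖m n‖ ≤ A := by
    intro n
    rw [← ENNReal.ofReal_le_ofReal_iff hA, hAe]
    exact (le_iSup (fun j => ENNReal.ofReal ‖m j‖) n).trans le_self_add
  have hvar : eVar u m ≤ ENNReal.ofReal A := by
    rw [hAe]; exact le_add_self
  obtain ⟨g, hg⟩ := main_rep u ε hu hε m A hA hmn hvar
  refine ⟨⟨_, g, hg⟩, ?_⟩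
  unfold RuNorm
  refine iInf_le_of_le _ (iInf_le_of_le g (iInf_le_of_le hg ?_))
  rw [← hAe, ← ENNReal.ofReal_mul (by positivity)]
  apply ENNReal.ofReal_le_ofReal
  have : (fun l : ℕ => ‖((A * 4 * q ^ l : ℝ) : ℂ)‖) = fun l => A * 4 * q ^ l := by
    funext l
    rw [Complex.norm_real, Real.norm_of_nonneg (by positivity)]
  rw [this, tsum_mul_left, tsum_geometric_of_lt_one hq0.le hq1]
  apply le_of_eq; ring
end

section
/- Let u ≥ 1 and f : ℕ → ℂ with 𝒱_u(f) = 1, and let w be the associated variation function. Then there exists a continuous function ρ : [0,1] → ℂ such that |ρ(t) − ρ(s)| ≤ 3 |t − s|^{1/u} for all s, t ∈ [0,1] and ρ(w(n)) = f(n) for every n ∈ ℕ. -/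
open scoped ENNReal

/-- The variation function `w` associated to `f`: `w n` is the supremum over all
strings `0 ≤ j 0 < ⋯ < j N ≤ n` of `∑_{i=1}^N |f (j i) - f (j (i-1))|^u`
(for `n = 0` only the trivial strings occur and `w 0 = 0`). -/
noncomputable def varFun (u : ℝ) (f : ℕ → ℂ) (n : ℕ) : ℝ :=
  sSup {x : ℝ | ∃ (N : ℕ) (j : Fin (N + 1) → ℕ), StrictMono j ∧ (∀ i, j i ≤ n) ∧
    x = ∑ i : Fin N, ‖f (j i.succ) - f (j i.castSucc)‖ ^ u}

theorem mcshane_aux (α : ℝ) (h0 : 0 < α) (h1 : α ≤ 1) (w a : ℕ → ℝ)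
    (h : ∀ m n, |a m - a n| ≤ |w m - w n| ^ α) :
    ∃ g : ℝ → ℝ, (∀ s t, |g t - g s| ≤ |t - s| ^ α) ∧ ∀ n, g (w n) = a n := by
  have tri : ∀ x y z : ℝ, |x - z| ^ α ≤ |x - y| ^ α + |y - z| ^ α := fun x y z =>
    (Real.rpow_le_rpow (abs_nonneg _) (abs_sub_le x y z) h0.le).trans
      (Real.rpow_add_le_add_rpow (abs_nonneg _) (abs_nonneg _) h0.le h1)
  have bdd : ∀ t, BddBelow (Set.range fun n => a n + |t - w n| ^ α) := by
    intro t
    refine ⟨a 0 - |t - w 0| ^ α, ?_⟩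
    rintro _ ⟨n, rfl⟩
    have e1 := abs_le.1 (h 0 n)
    have e2 := tri (w 0) t (w n)
    rw [abs_sub_comm (w 0) t] at e2
    simp only
    linarith [e1.2]
  have key : ∀ s t, (⨅ n, (a n + |t - w n| ^ α)) - (⨅ n, (a n + |s - w n| ^ α)) ≤ |t - s| ^ α := by
    intro s t
    have : (⨅ n, (a n + |t - w n| ^ α)) - |t - s| ^ α ≤ ⨅ n, (a n + |s - w n| ^ α) := by
      refine le_ciInf fun n => ?_
      have e1 := ciInf_le (bdd t) n
      have e2 := tri t s (w n)
      linarith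
    linarith
  refine ⟨fun t => ⨅ n, (a n + |t - w n| ^ α), ?_, ?_⟩
  · intro s t
    rw [abs_le]
    have e1 := key s t
    have e2 := key t s
    rw [abs_sub_comm s t] at e2
    constructor <;> linarith
  · intro n
    apply le_antisymm
    · have := ciInf_le (bdd (w n)) n
      simpa [Real.zero_rpow h0.ne'] using this
    · refine le_ciInf fun k => ?_
      have := (abs_le.1 (h n k)).2
      linarith

theorem sum_le_one_aux (u : ℝ) (hu : 1 ≤ u) (f : ℕ → ℂ) (hf : eVar u f = 1)
    (N : ℕ) (j : Fin (N + 1) → ℕ) (hj : StrictMono j) :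
    ∑ i : Fin N, ‖f (j i.succ) - f (j i.castSucc)‖ ^ u ≤ 1 := by
  have hu0 : 0 < u := by linarith
  have h1 : (∑ i : Fin N, (ENNReal.ofReal ‖f (j i.succ) - f (j i.castSucc)‖) ^ u) ^ (1 / u) ≤ 1 := by
    rw [← hf]
    unfold eVar
    exact le_iSup_of_le N (le_iSup_of_le j (le_iSup_of_le hj le_rfl))
  have h2 : (∑ i : Fin N, (ENNReal.ofReal ‖f (j i.succ) - f (j i.castSucc)‖) ^ u) ≤ 1 := by
    by_contra hc
    push Not at hc
    exact absurd h1 (not_le.2 (ENNReal.one_lt_rpow hc (by positivity)))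
  have h3 : (∑ i : Fin N, (ENNReal.ofReal ‖f (j i.succ) - f (j i.castSucc)‖) ^ u)
      = ENNReal.ofReal (∑ i : Fin N, ‖f (j i.succ) - f (j i.castSucc)‖ ^ u) := by
    rw [ENNReal.ofReal_sum_of_nonneg (fun i _ => by positivity)]
    refine Finset.sum_congr rfl fun i _ => ?_
    rw [ENNReal.ofReal_rpow_of_nonneg (norm_nonneg _) hu0.le]
  rw [h3] at h2
  exact ENNReal.ofReal_le_one.1 h2

theorem extend_aux (u : ℝ) (f : ℕ → ℂ) (N : ℕ) (j : Fin (N + 1) → ℕ) (hj : StrictMono j)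
    (n : ℕ) (hn : j (Fin.last N) < n) :
    ∃ j' : Fin (N + 1 + 1) → ℕ, StrictMono j' ∧ j' (Fin.last (N + 1)) = n ∧
      ∑ i : Fin (N + 1), ‖f (j' i.succ) - f (j' i.castSucc)‖ ^ u =
      ∑ i : Fin N, ‖f (j i.succ) - f (j i.castSucc)‖ ^ u + ‖f n - f (j (Fin.last N))‖ ^ u := by
  refine ⟨Fin.snoc (α := fun _ => ℕ) j n, ?_, by simp, ?_⟩
  · rw [Fin.strictMono_iff_lt_succ]
    intro i
    refine Fin.lastCases ?_ (fun i => ?_) i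
    · simpa using hn
    · rw [Fin.succ_castSucc, Fin.snoc_castSucc, Fin.snoc_castSucc]
      exact hj (Fin.castSucc_lt_succ)
  · rw [Fin.sum_univ_castSucc]
    simp only [Fin.succ_castSucc, Fin.snoc_castSucc, Fin.succ_last, Fin.snoc_last]

theorem holder_aux (u : ℝ) (hu : 1 ≤ u) (f : ℕ → ℂ) (hf : eVar u f = 1) (m n : ℕ) (hmn : m < n) :
    ‖f n - f m‖ ^ u ≤ varFun u f n - varFun u f m := by
  have up : ∀ (N : ℕ) (j : Fin (N + 1) → ℕ), StrictMono j → j (Fin.last N) = m →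
      ∑ i : Fin N, ‖f (j i.succ) - f (j i.castSucc)‖ ^ u + ‖f n - f m‖ ^ u ≤ varFun u f n := by
    intro N j hj hl
    obtain ⟨j', hj', hl', hs⟩ := extend_aux u f N j hj n (hl ▸ hmn)
    rw [hl] at hs
    rw [← hs]
    refine le_csSup ⟨1, ?_⟩ ⟨N + 1, j', hj', fun i => ?_, rfl⟩
    · rintro _ ⟨N, j, hj, -, rfl⟩
      exact sum_le_one_aux u hu f hf N j hj
    · rw [← hl']
      exact hj'.monotone (Fin.le_last i)
  have : varFun u f m ≤ varFun u f n - ‖f n - f m‖ ^ u := by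
    apply csSup_le
    · exact ⟨_, 0, fun _ => m, Subsingleton.strictMono (α := Fin 1) _, fun _ => le_rfl, rfl⟩
    · rintro _ ⟨N, j, hj, hle, rfl⟩
      rcases (hle (Fin.last N)).eq_or_lt with h | h
      · linarith [up N j hj h]
      · obtain ⟨j', hj', hl', hs⟩ := extend_aux u f N j hj m h
        have e := up _ j' hj' hl'
        have : 0 ≤ ‖f m - f (j (Fin.last N))‖ ^ u := by positivity
        linarith
  linarith

/-- Let `u ≥ 1` and `f : ℕ → ℂ` with `𝒱_u(f) = 1`, and let `w` be the associated
variation function. Then there is a continuous `ρ : [0,1] → ℂ` with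
`|ρ t - ρ s| ≤ 3 |t - s|^(1/u)` on `[0,1]` and `ρ (w n) = f n` for all `n`. -/
theorem haar_stmt6 (u : ℝ) (hu : 1 ≤ u) (f : ℕ → ℂ) (hf : eVar u f = 1) :
    ∃ ρ : ℝ → ℂ, ContinuousOn ρ (Set.Icc 0 1) ∧
      (∀ s ∈ Set.Icc (0:ℝ) 1, ∀ t ∈ Set.Icc (0:ℝ) 1,
        ‖ρ t - ρ s‖ ≤ 3 * |t - s| ^ (1 / u)) ∧
      ∀ n : ℕ, ρ (varFun u f n) = f n := by
  have hu0 : 0 < u := by linarith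
  have hα : 0 < 1 / u := by positivity
  have hα1 : 1 / u ≤ 1 := by rw [div_le_one hu0]; exact hu
  have lt : ∀ m n, m < n → ‖f n - f m‖ ≤ |varFun u f n - varFun u f m| ^ (1 / u) := by
    intro m n hmn
    have h := holder_aux u hu f hf m n hmn
    have h2 := Real.rpow_le_rpow (by positivity) (h.trans (le_abs_self _)) hα.le
    rwa [← Real.rpow_mul (norm_nonneg _), mul_one_div_cancel hu0.ne', Real.rpow_one] at h2
  have all : ∀ m n, ‖f m - f n‖ ≤ |varFun u f m - varFun u f n| ^ (1 / u) := by
    intro m n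
    rcases lt_trichotomy m n with h | h | h
    · rw [norm_sub_rev, abs_sub_comm]; exact lt m n h
    · subst h; simp; positivity
    · exact lt n m h
  obtain ⟨g, hg, hg'⟩ := mcshane_aux (1 / u) hα hα1 (varFun u f) (fun n => (f n).re)
    (fun m n => by
      have := Complex.abs_re_le_norm (f m - f n)
      rw [Complex.sub_re] at this
      exact this.trans (all m n))
  obtain ⟨k, hk, hk'⟩ := mcshane_aux (1 / u) hα hα1 (varFun u f) (fun n => (f n).im)
    (fun m n => by
      have := Complex.abs_im_le_norm (f m - f n)
      rw [Complex.sub_im] at this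
      exact this.trans (all m n))
  have H : ∀ s t, ‖(⟨g t, k t⟩ : ℂ) - ⟨g s, k s⟩‖ ≤ 3 * |t - s| ^ (1 / u) := by
    intro s t
    have e := Complex.norm_le_abs_re_add_abs_im ((⟨g t, k t⟩ : ℂ) - ⟨g s, k s⟩)
    simp only [Complex.sub_re, Complex.sub_im] at e
    have : 0 ≤ |t - s| ^ (1 / u) := by positivity
    linarith [hg s t, hk s t]
  refine ⟨fun t => ⟨g t, k t⟩, ?_, fun s _ t _ => H s t, fun n => ?_⟩
  · apply Continuous.continuousOn
    rw [continuous_iff_continuousAt]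
    intro s
    rw [ContinuousAt, tendsto_iff_norm_sub_tendsto_zero]
    refine squeeze_zero (fun _ => norm_nonneg _) (fun t => H s t) ?_
    have c : Continuous fun t : ℝ => 3 * |t - s| ^ (1 / u) :=
      continuous_const.mul ((continuous_id.sub continuous_const).abs.rpow_const
        (fun _ => Or.inr hα.le))
    have := c.tendsto s
    simpa [Real.zero_rpow hα.ne', hu0.ne'] using this
  · exact Complex.ext (hg' n) (hk' n)
end

section
/- Let u ≥ 1, let (t_n)_{n≥0} be a strictly increasing sequence in [0,1] with t_0 = 0 and supremum T ≤ 1, and let (y_n)_{n≥0} be complex numbers satisfying |y_n − y_m| ≤ (t_n − t_m)^{1/u} for all m < n. Let ρ : [0, T) → ℂ be the piecewise-linear interpolant, i.e. ρ(t) = y_n + ((y_{n+1} − y_n)/(t_{n+1} − t_n)) (t − t_n) for t ∈ [t_n, t_{n+1}). Then |ρ(t) − ρ(s)| ≤ 3 |t − s|^{1/u} for all s, t ∈ [0, T). -/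
theorem haar_aux (a : ℝ) (ha1 : a ≤ 1) (w : ℂ) (δ d e : ℝ) (ha0 : 0 < a)
    (hw : ‖w‖ ≤ δ ^ a) (hδ : 0 < δ) (hd : 0 ≤ d) (hdδ : d ≤ δ) (hde : d ≤ e) :
    ‖w / (δ : ℂ) * (d : ℂ)‖ ≤ e ^ a := by
  refine le_trans ?_ (Real.rpow_le_rpow hd hde ha0.le)
  rw [norm_mul, norm_div, Complex.norm_real, Complex.norm_real, Real.norm_of_nonneg hδ.le,
    Real.norm_of_nonneg hd]
  rcases hd.eq_or_lt with h | h
  · subst h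
    simp [Real.zero_rpow ha0.ne']
  · have h1 : d / δ ≤ (d / δ) ^ a := by
      have := Real.rpow_le_rpow_of_exponent_ge (div_pos h hδ) ((div_le_one hδ).2 hdδ) ha1
      rwa [Real.rpow_one] at this
    have hp : 0 < δ ^ a := Real.rpow_pos_of_pos hδ a
    calc ‖w‖ / δ * d = ‖w‖ * (d / δ) := by ring
      _ ≤ δ ^ a * (d / δ) ^ a := by gcongr
      _ = d ^ a := by
        rw [Real.div_rpow hd hδ.le]
        field_simp

/-- Let `u ≥ 1`, let `(t n)` be a strictly increasing sequence in `[0,1]` with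
`t 0 = 0` and supremum `T ≤ 1`, and let `(y n)` satisfy
`|y n - y m| ≤ (t n - t m)^(1/u)` for `m < n`. If `ρ : [0,T) → ℂ` is the
piecewise-linear interpolant, i.e.
`ρ x = y n + ((y (n+1) - y n)/(t (n+1) - t n)) (x - t n)` on `[t n, t (n+1))`,
then `|ρ x - ρ s| ≤ 3 |x - s|^(1/u)` for all `s, x ∈ [0,T)`. -/
theorem haar_stmt8 (u : ℝ) (hu : 1 ≤ u) (t : ℕ → ℝ) (ht : StrictMono t)
    (ht0 : t 0 = 0) (htm : ∀ n, t n ∈ Set.Icc (0:ℝ) 1)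
    (T : ℝ) (hT : IsLUB (Set.range t) T) (hT1 : T ≤ 1)
    (y : ℕ → ℂ) (hy : ∀ m n : ℕ, m < n → ‖y n - y m‖ ≤ (t n - t m) ^ (1 / u))
    (ρ : ℝ → ℂ)
    (hρ : ∀ n : ℕ, ∀ x ∈ Set.Ico (t n) (t (n + 1)),
      ρ x = y n + ((y (n + 1) - y n) / ((t (n + 1) - t n : ℝ) : ℂ))
        * ((x - t n : ℝ) : ℂ)) :
    ∀ s ∈ Set.Ico (0:ℝ) T, ∀ x ∈ Set.Ico (0:ℝ) T,
      ‖ρ x - ρ s‖ ≤ 3 * |x - s| ^ (1 / u) := by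
  have ha0 : 0 < 1 / u := by positivity
  have ha1 : 1 / u ≤ 1 := by
    rw [div_le_one (by linarith)]
    exact hu
  generalize 1 / u = a at *
  have hex : ∀ x ∈ Set.Ico (0:ℝ) T, ∃ n, x ∈ Set.Ico (t n) (t (n + 1)) := by
    intro x hx
    have h1 : ∃ n, x < t n := by
      obtain ⟨_, ⟨n, rfl⟩, h, _⟩ := hT.exists_between hx.2
      exact ⟨n, h⟩
    classical
    have h2 := Nat.find_spec h1
    have h3 : Nat.find h1 ≠ 0 := by
      intro h0
      rw [h0, ht0] at h2
      exact absurd hx.1 (not_le.2 h2)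
    obtain ⟨k, hk⟩ := Nat.exists_eq_succ_of_ne_zero h3
    refine ⟨k, ?_, ?_⟩
    · exact not_lt.1 (Nat.find_min h1 (by omega))
    · rw [hk] at h2
      exact h2
  have key : ∀ s ∈ Set.Ico (0:ℝ) T, ∀ x ∈ Set.Ico (0:ℝ) T, s ≤ x →
      ‖ρ x - ρ s‖ ≤ 3 * |x - s| ^ a := by
    intro s hs x hx hsx
    rw [abs_of_nonneg (sub_nonneg.2 hsx)]
    obtain ⟨m, hm⟩ := hex s hs
    obtain ⟨n, hn⟩ := hex x hx
    have hpos : 0 ≤ (x - s) ^ a := Real.rpow_nonneg (sub_nonneg.2 hsx) a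
    have hδ : ∀ k, 0 < t (k + 1) - t k := fun k => sub_pos.2 (ht (Nat.lt_succ_self k))
    have hw : ∀ k, ‖y (k + 1) - y k‖ ≤ (t (k + 1) - t k) ^ a :=
      fun k => hy k (k + 1) (Nat.lt_succ_self k)
    have hmn : m ≤ n := by
      have : t m < t (n + 1) := lt_of_le_of_lt (hm.1.trans hsx) hn.2
      have := ht.lt_iff_lt.1 this
      omega
    obtain ⟨hm1, hm2⟩ := hm
    obtain ⟨hn1, hn2⟩ := hn
    rcases hmn.eq_or_lt with h | h
    · subst h
      have e : ρ x - ρ s = (y (m + 1) - y m) / ((t (m + 1) - t m : ℝ) : ℂ)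
          * ((x - s : ℝ) : ℂ) := by
        rw [hρ m x ⟨hn1, hn2⟩, hρ m s ⟨hm1, hm2⟩]
        push_cast
        ring
      rw [e]
      have := haar_aux a ha1 _ _ (x - s) (x - s) ha0 (hw m) (hδ m) (by linarith)
        (by linarith) le_rfl
      linarith
    · have hle : t (m + 1) ≤ t n := ht.monotone h
      have e1 : ρ x - y n = (y (n + 1) - y n) / ((t (n + 1) - t n : ℝ) : ℂ)
          * ((x - t n : ℝ) : ℂ) := by
        rw [hρ n x ⟨hn1, hn2⟩]
        ring
      have e2 : y (m + 1) - ρ s = (y (m + 1) - y m) / ((t (m + 1) - t m : ℝ) : ℂ)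
          * ((t (m + 1) - s : ℝ) : ℂ) := by
        rw [hρ m s ⟨hm1, hm2⟩]
        have : ((t (m + 1) - t m : ℝ) : ℂ) ≠ 0 := by exact_mod_cast (hδ m).ne'
        have h3 : ((t (m + 1) - s : ℝ) : ℂ)
            = ((t (m + 1) - t m : ℝ) : ℂ) - ((s - t m : ℝ) : ℂ) := by
          push_cast
          ring
        rw [h3, mul_sub, div_mul_cancel₀ _ this]
        ring
      have b1 : ‖ρ x - y n‖ ≤ (x - s) ^ a := by
        rw [e1]
        exact haar_aux a ha1 _ _ _ _ ha0 (hw n) (hδ n) (by linarith) (by linarith) (by linarith)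
      have b2 : ‖y (m + 1) - ρ s‖ ≤ (x - s) ^ a := by
        rw [e2]
        exact haar_aux a ha1 _ _ _ _ ha0 (hw m) (hδ m) (by linarith) (by linarith) (by linarith)
      have b3 : ‖y n - y (m + 1)‖ ≤ (x - s) ^ a := by
        rcases (Nat.succ_le_of_lt h).eq_or_lt with h' | h'
        · have : m + 1 = n := h'
          rw [this]
          simpa using hpos
        · exact (hy _ _ h').trans
            (Real.rpow_le_rpow (by linarith) (by linarith) ha0.le)
      have : ρ x - ρ s = (ρ x - y n) + (y n - y (m + 1)) + (y (m + 1) - ρ s) := by ring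
      rw [this]
      have := norm_add₃_le (a := ρ x - y n) (b := y n - y (m + 1)) (c := y (m + 1) - ρ s)
      linarith
  intro s hs x hx
  rcases le_total s x with h | h
  · exact key s hs x hx h
  · rw [norm_sub_rev, abs_sub_comm]
    exact key x hx s hs h
end

section
/- Let u ≥ 1, ε > 0, A ≥ 0, and let ρ : [0,1] → ℂ be continuous with |ρ(t) − ρ(s)| ≤ A |t − s|^{1/u} for all s, t ∈ [0,1]. Then for every j ≥ 0, ( Σ_{μ=0}^{2^j − 1} |2^j ⟨h_{j,μ}, ρ⟩|^{u+ε} )^{1/(u+ε)} ≤ A · 2^{−1/u} · 2^{−j/u} · 2^{j/(u+ε)}. -/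
/-- The Haar function `h_{j,μ}` on `[0,1]`: equal to `1` on
`[2^{-j}μ, 2^{-j}(μ+1/2))`, to `-1` on `[2^{-j}(μ+1/2), 2^{-j}(μ+1))`, and `0`
elsewhere. -/
noncomputable def haarFn (j μ : ℕ) : ℝ → ℝ := fun t =>
  Set.indicator (Set.Ico ((μ : ℝ) / 2 ^ j) (((μ : ℝ) + 1 / 2) / 2 ^ j))
      (fun _ => (1 : ℝ)) t
  - Set.indicator (Set.Ico (((μ : ℝ) + 1 / 2) / 2 ^ j) (((μ : ℝ) + 1) / 2 ^ j))
      (fun _ => (1 : ℝ)) t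

/-- The Haar coefficient `⟨h_{j,μ}, ρ⟩ = ∫₀¹ h_{j,μ}(t) ρ(t) dt`. -/
noncomputable def haarCoeff (j μ : ℕ) (ρ : ℝ → ℂ) : ℂ :=
  ∫ t in (0:ℝ)..1, haarFn j μ t • ρ t

lemma haarCoeff_bound (u A : ℝ) (hu : 1 ≤ u) (hA : 0 ≤ A)
    (ρ : ℝ → ℂ) (hcont : ContinuousOn ρ (Set.Icc 0 1))
    (hH : ∀ s ∈ Set.Icc (0:ℝ) 1, ∀ t ∈ Set.Icc (0:ℝ) 1,
      ‖ρ t - ρ s‖ ≤ A * |t - s| ^ (1 / u)) (j μ : ℕ) (hμ : μ < 2 ^ j) :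
    ‖(2 ^ j : ℂ) * haarCoeff j μ ρ‖ ≤ A * (2:ℝ) ^ (-(1 / u)) * (2:ℝ) ^ (-(j : ℝ) / u) := by
  have hP : (0:ℝ) < 2 ^ j := by positivity
  obtain ⟨a, ha⟩ : ∃ a : ℝ, a = (μ : ℝ) / 2 ^ j := ⟨_, rfl⟩
  obtain ⟨d, hd⟩ : ∃ d : ℝ, d = (1 / 2 : ℝ) / 2 ^ j := ⟨_, rfl⟩
  have hm : ((μ : ℝ) + 1 / 2) / 2 ^ j = a + d := by rw [ha, hd]; ring
  have hb : ((μ : ℝ) + 1) / 2 ^ j = a + d + d := by rw [ha, hd]; ring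
  have hd0 : 0 < d := by rw [hd]; positivity
  have ha0 : 0 ≤ a := by rw [ha]; positivity
  have hb1 : a + d + d ≤ 1 := by
    rw [← hb, div_le_one hP]
    exact_mod_cast hμ
  have key : haarCoeff j μ ρ = (∫ t in a..(a + d), ρ t) - ∫ t in (a + d)..(a + d + d), ρ t := by
    have hint : MeasureTheory.IntegrableOn ρ (Set.Icc 0 1) := hcont.integrableOn_Icc
    have e : ∀ t, haarFn j μ t • ρ t = (Set.Ico a (a + d)).indicator ρ t
        - (Set.Ico (a + d) (a + d + d)).indicator ρ t := by
      intro t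
      simp only [haarFn, hm, hb, ← ha, sub_smul]
      congr 1 <;> simp only [Set.indicator] <;> split_ifs <;> simp
    have h1 : ∀ x y : ℝ, 0 ≤ x → y ≤ 1 → Set.Icc (0:ℝ) 1 ∩ Set.Ico x y = Set.Ico x y := by
      intro x y hx hy
      apply Set.inter_eq_right.2
      intro t ht
      exact ⟨hx.trans ht.1, ht.2.le.trans hy⟩
    unfold haarCoeff
    rw [intervalIntegral.integral_of_le zero_le_one, ← MeasureTheory.integral_Icc_eq_integral_Ioc]
    simp_rw [e]
    rw [MeasureTheory.integral_sub (hint.indicator measurableSet_Ico)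
      (hint.indicator measurableSet_Ico), MeasureTheory.setIntegral_indicator measurableSet_Ico,
      MeasureTheory.setIntegral_indicator measurableSet_Ico, h1 _ _ ha0 (by linarith),
      h1 _ _ (by linarith) hb1, intervalIntegral.integral_of_le (by linarith),
      intervalIntegral.integral_of_le (by linarith),
      MeasureTheory.integral_Ico_eq_integral_Ioc, MeasureTheory.integral_Ico_eq_integral_Ioc]
  have i1 : IntervalIntegrable ρ MeasureTheory.volume a (a + d) := by
    apply ContinuousOn.intervalIntegrable_of_Icc (by linarith)
    exact hcont.mono (Set.Icc_subset_Icc ha0 (by linarith))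
  have i2 : IntervalIntegrable (fun t => ρ (t + d)) MeasureTheory.volume a (a + d) := by
    apply ContinuousOn.intervalIntegrable_of_Icc (by linarith)
    apply hcont.comp (by fun_prop)
    intro t ht
    exact ⟨by linarith [ht.1], by linarith [ht.2]⟩
  have key2 : haarCoeff j μ ρ = ∫ t in a..(a + d), (ρ t - ρ (t + d)) := by
    rw [key, intervalIntegral.integral_sub i1 i2, intervalIntegral.integral_comp_add_right]
  have hn : ‖haarCoeff j μ ρ‖ ≤ (A * d ^ (1 / u)) * d := by
    rw [key2]
    have := intervalIntegral.norm_integral_le_of_norm_le_const (a := a) (b := a + d)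
      (f := fun t => ρ t - ρ (t + d)) (C := A * d ^ (1 / u)) (by
        intro t ht
        rw [Set.uIoc_of_le (by linarith)] at ht
        have := hH (t + d) ⟨by linarith [ht.1], by linarith [ht.2]⟩ t
          ⟨by linarith [ht.1], by linarith [ht.2]⟩
        rwa [show t - (t + d) = -d by ring, abs_neg, abs_of_pos hd0] at this)
    rwa [add_sub_cancel_left, abs_of_pos hd0] at this
  have hdu : d ^ (1 / u) = (2:ℝ) ^ (-(1 / u)) * (2:ℝ) ^ (-(j : ℝ) / u) := by
    have : d = (2:ℝ) ^ (-1 - (j:ℝ)) := by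
      rw [hd, Real.rpow_sub (by norm_num), Real.rpow_natCast, Real.rpow_neg_one]; norm_num
    rw [this, ← Real.rpow_mul (by norm_num), ← Real.rpow_add (by norm_num)]
    congr 1; ring
  rw [norm_mul, mul_assoc A, ← hdu]
  have h2 : ‖(2 ^ j : ℂ)‖ = 2 ^ j := by simp
  rw [h2]
  have hX : 0 ≤ A * d ^ (1 / u) := by positivity
  have hPd : (2:ℝ) ^ j * d = 1 / 2 := by rw [hd]; field_simp
  calc (2:ℝ) ^ j * ‖haarCoeff j μ ρ‖ ≤ 2 ^ j * ((A * d ^ (1 / u)) * d) := by gcongr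
    _ = (A * d ^ (1 / u)) * (2 ^ j * d) := by ring
    _ ≤ A * d ^ (1 / u) := by rw [hPd]; linarith

/-- If `ρ : [0,1] → ℂ` is continuous with `|ρ t - ρ s| ≤ A |t - s|^(1/u)` on
`[0,1]` (`u ≥ 1`, `A ≥ 0`, `ε > 0`), then for every `j ≥ 0`,
`(Σ_{μ=0}^{2^j-1} |2^j ⟨h_{j,μ}, ρ⟩|^{u+ε})^{1/(u+ε)} ≤ A · 2^{-1/u} · 2^{-j/u} · 2^{j/(u+ε)}`. -/
theorem haar_stmt10 (u ε A : ℝ) (hu : 1 ≤ u) (hε : 0 < ε) (hA : 0 ≤ A)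
    (ρ : ℝ → ℂ) (hcont : ContinuousOn ρ (Set.Icc 0 1))
    (hH : ∀ s ∈ Set.Icc (0:ℝ) 1, ∀ t ∈ Set.Icc (0:ℝ) 1,
      ‖ρ t - ρ s‖ ≤ A * |t - s| ^ (1 / u)) :
    ∀ j : ℕ,
      (∑ μ ∈ Finset.range (2 ^ j), ‖(2 ^ j : ℂ) * haarCoeff j μ ρ‖ ^ (u + ε))
          ^ (1 / (u + ε))
        ≤ A * (2:ℝ) ^ (-(1 / u)) * (2:ℝ) ^ (-(j : ℝ) / u)
            * (2:ℝ) ^ ((j : ℝ) / (u + ε)) := by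
  intro j
  have hp : 0 < u + ε := by linarith
  set K : ℝ := A * (2:ℝ) ^ (-(1 / u)) * (2:ℝ) ^ (-(j : ℝ) / u) with hK
  have hK0 : 0 ≤ K := by positivity
  have hs : ∑ μ ∈ Finset.range (2 ^ j), ‖(2 ^ j : ℂ) * haarCoeff j μ ρ‖ ^ (u + ε)
      ≤ K ^ (u + ε) * (2:ℝ) ^ (j : ℝ) := by
    calc _ ≤ ∑ μ ∈ Finset.range (2 ^ j), K ^ (u + ε) := by
          apply Finset.sum_le_sum
          intro μ hμ
          exact Real.rpow_le_rpow (norm_nonneg _)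
            (haarCoeff_bound u A hu hA ρ hcont hH j μ (Finset.mem_range.1 hμ)) hp.le
      _ = _ := by simp [mul_comm]
  calc _ ≤ (K ^ (u + ε) * (2:ℝ) ^ (j : ℝ)) ^ (1 / (u + ε)) :=
        Real.rpow_le_rpow (by positivity) hs (by positivity)
    _ = _ := by
        rw [Real.mul_rpow (by positivity) (by positivity), ← Real.rpow_mul hK0,
          mul_one_div_cancel hp.ne', Real.rpow_one, ← Real.rpow_mul (by norm_num), mul_one_div]
end

section
/- Let u ≥ 1, A ≥ 0, and let ρ : [0,1] → ℂ be continuous with |ρ(t) − ρ(s)| ≤ A |t − s|^{1/u} for all s, t ∈ [0,1]. For j ≥ 0 set ρ_j(t) := Σ_{μ=0}^{2^j − 1} 2^j ⟨h_{j,μ}, ρ⟩ h_{j,μ}(t). Then sup_{t ∈ [0,1)} |ρ_j(t)| ≤ A · 2^{−1/u} · 2^{−j/u} for every j, and the series Σ_{j=0}^∞ ρ_j(t) converges uniformly on [0,1) to ρ(t) − ∫₀¹ ρ(s) ds. -/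
/-- The `j`-th Haar layer `ρ_j(t) = Σ_{μ=0}^{2^j-1} 2^j ⟨h_{j,μ}, ρ⟩ h_{j,μ}(t)`. -/
noncomputable def haarLayer (j : ℕ) (ρ : ℝ → ℂ) (t : ℝ) : ℂ :=
  ∑ μ ∈ Finset.range (2 ^ j), ((2 ^ j : ℂ) * haarCoeff j μ ρ) * ((haarFn j μ t : ℝ) : ℂ)

open MeasureTheory in
theorem haar_aux_ind (ρ : ℝ → ℂ) (a b : ℝ) (ha : 0 ≤ a) (hab : a ≤ b) (hb : b ≤ 1) :
    ∫ t in (0:ℝ)..1, (Set.indicator (Set.Ico a b) (fun _ => (1 : ℝ)) t) • ρ t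
      = ∫ t in a..b, ρ t := by
  have h1 : ∀ t, (Set.indicator (Set.Ico a b) (fun _ => (1 : ℝ)) t) • ρ t
      = Set.indicator (Set.Ico a b) ρ t := by
    intro t
    by_cases h : t ∈ Set.Ico a b <;> simp [h]
  simp_rw [h1]
  rw [intervalIntegral.integral_of_le zero_le_one, intervalIntegral.integral_of_le hab,
    ← integral_Ico_eq_integral_Ioc, ← integral_Ico_eq_integral_Ioc,
    setIntegral_indicator measurableSet_Ico,
    Set.inter_eq_right.mpr (Set.Ico_subset_Ico ha hb)]

theorem haar_aux_int (ρ : ℝ → ℂ) (hcont : ContinuousOn ρ (Set.Icc 0 1)) (a b : ℝ)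
    (ha : 0 ≤ a) (hab : a ≤ b) (hb : b ≤ 1) : IntervalIntegrable ρ MeasureTheory.volume a b := by
  apply ContinuousOn.intervalIntegrable
  rw [Set.uIcc_of_le hab]
  exact hcont.mono (Set.Icc_subset_Icc ha hb)

open MeasureTheory in
theorem haar_aux_ind_int (ρ : ℝ → ℂ) (hcont : ContinuousOn ρ (Set.Icc 0 1)) (a b : ℝ) :
    IntervalIntegrable (fun t => (Set.indicator (Set.Ico a b) (fun _ => (1 : ℝ)) t) • ρ t)
      volume 0 1 := by
  have h1 : (fun t => (Set.indicator (Set.Ico a b) (fun _ => (1 : ℝ)) t) • ρ t)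
      = Set.indicator (Set.Ico a b) ρ := by
    funext t
    by_cases h : t ∈ Set.Ico a b <;> simp [h]
  rw [h1]
  have h2 := haar_aux_int ρ hcont 0 1 le_rfl zero_le_one le_rfl
  rw [intervalIntegrable_iff] at h2 ⊢
  exact h2.indicator measurableSet_Ico

/-- endpoints of the dyadic interval -/
theorem haar_aux_ends (j μ : ℕ) (hμ : μ < 2 ^ j) :
    (0:ℝ) ≤ (μ:ℝ) / 2 ^ j ∧ (μ:ℝ) / 2 ^ j ≤ ((μ:ℝ) + 1/2) / 2 ^ j ∧
    ((μ:ℝ) + 1/2) / 2 ^ j ≤ ((μ:ℝ) + 1) / 2 ^ j ∧ ((μ:ℝ) + 1) / 2 ^ j ≤ 1 := by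
  have h2 : (0:ℝ) < 2 ^ j := by positivity
  have h3 : (μ:ℝ) + 1 ≤ 2 ^ j := by exact_mod_cast hμ
  refine ⟨by positivity, by gcongr; linarith, by gcongr; linarith, ?_⟩
  rw [div_le_one h2]; exact h3

theorem haar_aux_coeff (ρ : ℝ → ℂ) (hcont : ContinuousOn ρ (Set.Icc 0 1)) (j μ : ℕ)
    (hμ : μ < 2 ^ j) :
    haarCoeff j μ ρ = (∫ t in ((μ:ℝ) / 2 ^ j)..(((μ:ℝ) + 1/2) / 2 ^ j), ρ t)
      - ∫ t in (((μ:ℝ) + 1/2) / 2 ^ j)..(((μ:ℝ) + 1) / 2 ^ j), ρ t := by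
  obtain ⟨h0, h1, h2, h3⟩ := haar_aux_ends j μ hμ
  unfold haarCoeff haarFn
  simp_rw [sub_smul]
  rw [intervalIntegral.integral_sub (haar_aux_ind_int ρ hcont _ _)
    (haar_aux_ind_int ρ hcont _ _), haar_aux_ind ρ _ _ h0 h1 (h2.trans h3),
    haar_aux_ind ρ _ _ (h0.trans h1) h2 h3]

/-- index of the dyadic interval -/
noncomputable def haarIdx (j : ℕ) (t : ℝ) : ℕ := ⌊(2:ℝ) ^ j * t⌋₊

theorem haarIdx_spec (j : ℕ) (t : ℝ) (ht : t ∈ Set.Ico (0:ℝ) 1) :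
    haarIdx j t < 2 ^ j ∧ (haarIdx j t : ℝ) / 2 ^ j ≤ t ∧
      t < ((haarIdx j t : ℝ) + 1) / 2 ^ j := by
  have h2 : (0:ℝ) < 2 ^ j := by positivity
  have h3 : 0 ≤ (2:ℝ) ^ j * t := mul_nonneg h2.le ht.1
  refine ⟨?_, ?_, ?_⟩
  · unfold haarIdx
    rw [Nat.floor_lt h3]
    push_cast
    nlinarith [ht.2]
  · rw [div_le_iff₀ h2, mul_comm]
    exact Nat.floor_le h3
  · rw [lt_div_iff₀ h2, mul_comm]
    exact Nat.lt_floor_add_one _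

theorem haarIdx_unique (j m : ℕ) (t : ℝ) (h1 : (m : ℝ) / 2 ^ j ≤ t)
    (h2 : t < ((m : ℝ) + 1) / 2 ^ j) : haarIdx j t = m := by
  have h0 : (0:ℝ) < 2 ^ j := by positivity
  rw [div_le_iff₀ h0, mul_comm] at h1
  rw [lt_div_iff₀ h0, mul_comm] at h2
  unfold haarIdx
  rw [Nat.floor_eq_iff (le_trans (by positivity) h1)]
  exact ⟨h1, h2⟩

theorem haar_aux_layer (ρ : ℝ → ℂ) (j : ℕ) (t : ℝ) (ht : t ∈ Set.Ico (0:ℝ) 1) :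
    haarLayer j ρ t = ((2 ^ j : ℂ) * haarCoeff j (haarIdx j t) ρ) *
      ((haarFn j (haarIdx j t) t : ℝ) : ℂ) := by
  obtain ⟨h1, h2, h3⟩ := haarIdx_spec j t ht
  unfold haarLayer
  apply Finset.sum_eq_single_of_mem _ (Finset.mem_range.mpr h1)
  intro μ hμ hne
  obtain ⟨_, e1, e2, _⟩ := haar_aux_ends j μ (Finset.mem_range.mp hμ)
  have : haarFn j μ t = 0 := by
    have hn : ¬ ((μ:ℝ) / 2 ^ j ≤ t ∧ t < ((μ:ℝ) + 1) / 2 ^ j) := by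
      rintro ⟨a, b⟩
      exact hne (haarIdx_unique j μ t a b).symm
    unfold haarFn
    rw [Set.indicator_of_notMem, Set.indicator_of_notMem, sub_zero]
    · rintro ⟨a, b⟩; exact hn ⟨e1.trans a, b⟩
    · rintro ⟨a, b⟩; exact hn ⟨a, b.trans_le e2⟩
  rw [this]; simp

theorem haar_aux_fn (j m : ℕ) (t : ℝ) (h1 : (m : ℝ) / 2 ^ j ≤ t)
    (h2 : t < ((m : ℝ) + 1) / 2 ^ j) :
    haarFn j m t = if t < ((m : ℝ) + 1/2) / 2 ^ j then 1 else -1 := by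
  unfold haarFn
  split_ifs with h
  · rw [Set.indicator_of_mem (Set.mem_Ico.mpr ⟨h1, h⟩), Set.indicator_of_notMem]
    · simp
    · rintro ⟨a, b⟩; linarith
  · rw [Set.indicator_of_notMem, Set.indicator_of_mem (Set.mem_Ico.mpr ⟨not_lt.mp h, h2⟩)]
    · simp
    · rintro ⟨a, b⟩; exact h b

/-- average of ρ over the dyadic interval -/
noncomputable def haarAvg (j : ℕ) (ρ : ℝ → ℂ) (t : ℝ) : ℂ :=
  (2 ^ j : ℂ) * ∫ s in ((haarIdx j t : ℝ) / 2 ^ j)..(((haarIdx j t : ℝ) + 1) / 2 ^ j), ρ s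

theorem haar_aux_tele (ρ : ℝ → ℂ) (hcont : ContinuousOn ρ (Set.Icc 0 1)) (j : ℕ) (t : ℝ)
    (ht : t ∈ Set.Ico (0:ℝ) 1) :
    haarLayer j ρ t = haarAvg (j+1) ρ t - haarAvg j ρ t := by
  obtain ⟨h1, h2, h3⟩ := haarIdx_spec j t ht
  obtain ⟨e0, e1, e2, e3⟩ := haar_aux_ends j _ h1
  rw [haar_aux_layer ρ j t ht, haar_aux_coeff ρ hcont j _ h1, haar_aux_fn j _ t h2 h3]
  unfold haarAvg
  generalize haarIdx j t = m at *
  rw [← intervalIntegral.integral_add_adjacent_intervals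
    (haar_aux_int ρ hcont _ _ e0 e1 (e2.trans e3))
    (haar_aux_int ρ hcont _ _ (e0.trans e1) e2 e3)]
  have p1 : (((2 * m : ℕ) : ℝ)) / 2 ^ (j+1) = (m:ℝ) / 2 ^ j := by
    push_cast; field_simp; ring
  have p2 : (((2 * m : ℕ) : ℝ) + 1) / 2 ^ (j+1) = ((m:ℝ) + 1/2) / 2 ^ j := by
    push_cast; field_simp; ring
  have p3 : (((2 * m + 1 : ℕ) : ℝ)) / 2 ^ (j+1) = ((m:ℝ) + 1/2) / 2 ^ j := by
    push_cast; field_simp; ring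
  have p4 : (((2 * m + 1 : ℕ) : ℝ) + 1) / 2 ^ (j+1) = ((m:ℝ) + 1) / 2 ^ j := by
    push_cast; field_simp; ring
  split_ifs with h
  · rw [haarIdx_unique (j+1) (2*m) t (by rw [p1]; exact h2) (by rw [p2]; exact h), p1, p2]
    push_cast; ring
  · rw [haarIdx_unique (j+1) (2*m+1) t (by rw [p3]; exact not_lt.mp h) (by rw [p4]; exact h3),
      p3, p4]
    push_cast; ring

theorem haar_aux_bound (u A : ℝ) (hu : 1 ≤ u) (hA : 0 ≤ A) (ρ : ℝ → ℂ)
    (hcont : ContinuousOn ρ (Set.Icc 0 1))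
    (hH : ∀ s ∈ Set.Icc (0:ℝ) 1, ∀ t ∈ Set.Icc (0:ℝ) 1,
      ‖ρ t - ρ s‖ ≤ A * |t - s| ^ (1 / u)) (j : ℕ) (t : ℝ) (ht : t ∈ Set.Ico (0:ℝ) 1) :
    ‖haarLayer j ρ t‖ ≤ A * (2:ℝ) ^ (-(1 / u)) * (2:ℝ) ^ (-(j : ℝ) / u) := by
  obtain ⟨h1, h2, h3⟩ := haarIdx_spec j t ht
  obtain ⟨e0, e1, e2, e3⟩ := haar_aux_ends j _ h1
  have hC : A * (2:ℝ) ^ (-(1 / u)) * (2:ℝ) ^ (-(j : ℝ) / u) = A * ((1/2) / 2 ^ j : ℝ) ^ (1/u) := by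
    rw [mul_assoc, ← Real.rpow_add two_pos]
    have : ((1/2) / 2 ^ j : ℝ) = (2:ℝ) ^ (-(1 + j : ℝ)) := by
      rw [Real.rpow_neg two_pos.le, Real.rpow_add two_pos, Real.rpow_one, Real.rpow_natCast]
      field_simp
    rw [this, ← Real.rpow_mul two_pos.le]
    congr 2
    ring
  rw [hC, haar_aux_layer ρ j t ht, haar_aux_coeff ρ hcont j _ h1, haar_aux_fn j _ t h2 h3]
  generalize haarIdx j t = m at *
  have hd : (0:ℝ) < (1/2) / 2 ^ j := by positivity
  have q1 : ((m:ℝ) + 1/2) / 2 ^ j = (m:ℝ) / 2 ^ j + (1/2) / 2 ^ j := by ring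
  have q2 : ((m:ℝ) + 1) / 2 ^ j = ((m:ℝ) + 1/2) / 2 ^ j + (1/2) / 2 ^ j := by ring
  have hd2 : (2:ℝ) ^ j * ((1/2) / 2 ^ j) = 1/2 := by field_simp
  rw [norm_mul, norm_mul]
  have n1 : ‖((if t < ((m : ℝ) + 1/2) / 2 ^ j then 1 else -1 : ℝ) : ℂ)‖ = 1 := by
    split_ifs <;> simp
  rw [n1, mul_one]
  have n2 : ‖(2 ^ j : ℂ)‖ = 2 ^ j := by simp
  rw [n2, q2]
  nth_rw 2 [q1]
  rw [q1] at e1 e2 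
  rw [q2, q1] at e2 e3
  generalize (m:ℝ) / 2 ^ j = a at *
  rw [q1]
  generalize ((1/2) / 2 ^ j : ℝ) = d at *
  rw [← intervalIntegral.integral_comp_add_right, ← intervalIntegral.integral_sub
    (haar_aux_int ρ hcont _ _ e0 e1 (e2.trans e3))]
  · have hb : ‖∫ x in a..(a+d), (ρ x - ρ (x + d))‖ ≤ (A * d ^ (1/u)) * |a + d - a| := by
      apply intervalIntegral.norm_integral_le_of_norm_le_const
      intro x hx
      rw [Set.uIoc_of_le e1] at hx
      have := hH (x+d) ⟨by linarith [hx.1], by linarith [hx.2]⟩ x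
        ⟨by linarith [hx.1], by linarith [hx.2]⟩
      rwa [show x - (x+d) = -d by ring, abs_neg, abs_of_pos hd] at this
    rw [show a + d - a = d by ring, abs_of_pos hd] at hb
    have hK : 0 ≤ A * d ^ (1/u) := by positivity
    calc _ ≤ (2:ℝ) ^ j * ((A * d ^ (1/u)) * d) := by gcongr
      _ = (A * d ^ (1/u)) * (2 ^ j * d) := by ring
      _ ≤ _ := by rw [hd2]; linarith
  · apply ContinuousOn.intervalIntegrable
    rw [Set.uIcc_of_le e1]
    apply hcont.comp (by fun_prop)
    intro x hx
    exact ⟨by linarith [hx.1], by linarith [hx.2]⟩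

theorem haar_aux_avg (u A : ℝ) (hu : 1 ≤ u) (hA : 0 ≤ A) (ρ : ℝ → ℂ)
    (hcont : ContinuousOn ρ (Set.Icc 0 1))
    (hH : ∀ s ∈ Set.Icc (0:ℝ) 1, ∀ t ∈ Set.Icc (0:ℝ) 1,
      ‖ρ t - ρ s‖ ≤ A * |t - s| ^ (1 / u)) (j : ℕ) (t : ℝ) (ht : t ∈ Set.Ico (0:ℝ) 1) :
    ‖ρ t - haarAvg j ρ t‖ ≤ A * ((1 / 2 : ℝ) ^ j) ^ (1 / u) := by
  obtain ⟨h1, h2, h3⟩ := haarIdx_spec j t ht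
  obtain ⟨e0, e1, e2, e3⟩ := haar_aux_ends j _ h1
  unfold haarAvg
  generalize haarIdx j t = m at *
  have hd : (0:ℝ) < (1/2) ^ j := by positivity
  have q1 : ((m:ℝ) + 1) / 2 ^ j = (m:ℝ) / 2 ^ j + (1/2) ^ j := by
    rw [one_div_pow]; ring
  have hd2 : (2:ℝ) ^ j * (1/2) ^ j = 1 := by rw [one_div_pow]; field_simp
  have e4 := e1.trans e2
  rw [q1] at h3 e3 e4 ⊢
  generalize (m:ℝ) / 2 ^ j = a at *
  generalize ((1/2) ^ j : ℝ) = d at *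
  have hd3 : (2:ℂ) ^ j * (d:ℂ) = 1 := by exact_mod_cast hd2
  have hrw : ρ t - 2 ^ j * ∫ s in a..(a+d), ρ s = 2 ^ j * ∫ s in a..(a+d), (ρ t - ρ s) := by
    rw [intervalIntegral.integral_sub (by simp) (haar_aux_int ρ hcont _ _ e0 e4 e3)]
    simp only [intervalIntegral.integral_const, add_sub_cancel_left, Complex.real_smul]
    linear_combination (-ρ t) * hd3
  have hb : ‖∫ x in a..(a+d), (ρ t - ρ x)‖ ≤ (A * d ^ (1/u)) * |a + d - a| := by
    apply intervalIntegral.norm_integral_le_of_norm_le_const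
    intro x hx
    rw [Set.uIoc_of_le e4] at hx
    refine (hH x ⟨by linarith [hx.1], by linarith [hx.2]⟩ t ⟨ht.1, ht.2.le⟩).trans ?_
    have : |t - x| ≤ d := by
      rw [abs_le]; constructor <;> linarith [hx.1, hx.2]
    gcongr
  rw [show a + d - a = d by ring, abs_of_pos hd] at hb
  rw [hrw, norm_mul]
  have n2 : ‖(2 ^ j : ℂ)‖ = 2 ^ j := by simp
  rw [n2]
  calc _ ≤ (2:ℝ) ^ j * ((A * d ^ (1/u)) * d) := by gcongr
    _ = (A * d ^ (1/u)) * (2 ^ j * d) := by ring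
    _ = _ := by rw [hd2, mul_one]

/-- If `ρ : [0,1] → ℂ` is continuous with `|ρ t - ρ s| ≤ A |t - s|^(1/u)` on
`[0,1]` (`u ≥ 1`, `A ≥ 0`), then `sup_{t ∈ [0,1)} |ρ_j t| ≤ A · 2^{-1/u} · 2^{-j/u}`
for every `j`, and `Σ_{j=0}^∞ ρ_j` converges uniformly on `[0,1)` to
`ρ - ∫₀¹ ρ(s) ds`. -/
theorem haar_stmt11 (u A : ℝ) (hu : 1 ≤ u) (hA : 0 ≤ A) (ρ : ℝ → ℂ)
    (hcont : ContinuousOn ρ (Set.Icc 0 1))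
    (hH : ∀ s ∈ Set.Icc (0:ℝ) 1, ∀ t ∈ Set.Icc (0:ℝ) 1,
      ‖ρ t - ρ s‖ ≤ A * |t - s| ^ (1 / u)) :
    (∀ j : ℕ, ∀ t ∈ Set.Ico (0:ℝ) 1,
      ‖haarLayer j ρ t‖ ≤ A * (2:ℝ) ^ (-(1 / u)) * (2:ℝ) ^ (-(j : ℝ) / u)) ∧
    TendstoUniformlyOn
      (fun N t => ∑ j ∈ Finset.range N, haarLayer j ρ t)
      (fun t => ρ t - ∫ s in (0:ℝ)..1, ρ s)
      Filter.atTop (Set.Ico 0 1) := by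
  refine ⟨haar_aux_bound u A hu hA ρ hcont hH, ?_⟩
  have hsum : ∀ N : ℕ, ∀ t ∈ Set.Ico (0:ℝ) 1,
      ∑ j ∈ Finset.range N, haarLayer j ρ t = haarAvg N ρ t - ∫ s in (0:ℝ)..1, ρ s := by
    intro N t ht
    rw [Finset.sum_congr rfl (fun j _ => haar_aux_tele ρ hcont j t ht),
      Finset.sum_range_sub (fun j => haarAvg j ρ t)]
    have h0 : haarIdx 0 t = 0 := by
      apply haarIdx_unique <;> simp [ht.1, ht.2]
    simp [haarAvg, h0]
  have hlim : Filter.Tendsto (fun N : ℕ => A * ((1 / 2 : ℝ) ^ N) ^ (1 / u)) Filter.atTop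
      (nhds 0) := by
    have hu' : 0 < 1 / u := by positivity
    have h1 : Filter.Tendsto (fun N : ℕ => (1 / 2 : ℝ) ^ N) Filter.atTop (nhds 0) :=
      tendsto_pow_atTop_nhds_zero_of_lt_one (by norm_num) (by norm_num)
    have h2 := (h1.rpow_const (p := 1 / u) (Or.inr hu'.le)).const_mul A
    rwa [Real.zero_rpow hu'.ne', mul_zero] at h2
  rw [Metric.tendstoUniformlyOn_iff]
  intro ε hε
  filter_upwards [hlim.eventually (gt_mem_nhds hε)] with N hN t ht
  rw [hsum N t ht, dist_eq_norm, sub_sub_sub_cancel_right]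
  exact (haar_aux_avg u A hu hA ρ hcont hH N t ht).trans_lt hN
end

section
/- Let u ≥ 1, ε > 0, and let m : ℕ → ℂ satisfy ‖m‖_{V_u} ≤ 1. Then there exist δ > 0 and C > 0 depending only on u and ε, complex coefficients (c_j)_{j≥0} with |c_j| ≤ C · 2^{−jδ}, and sequences m_j ∈ r_{u+ε}, such that m(n) = Σ_{j=0}^∞ c_j m_j(n) for every n ∈ ℕ. In particular, Σ_{j=0}^∞ |c_j|^σ < ∞ for every σ > 0. -/
open scoped ENNReal

/-- `x` is the sum of `u`-th powers of increments along some string ending at `n`. -/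
def chainSum (u : ℝ) (m : ℕ → ℂ) (n : ℕ) (x : ℝ) : Prop :=
  ∃ (N : ℕ) (j : Fin (N + 1) → ℕ), StrictMono j ∧ j (Fin.last N) = n ∧
    x = ∑ i : Fin N, ‖m (j i.succ) - m (j i.castSucc)‖ ^ u

lemma chainSum_zero (u : ℝ) (m : ℕ → ℂ) (n : ℕ) : chainSum u m n 0 :=
  ⟨0, fun _ => n, fun a b h => absurd h (by omega), rfl, by simp⟩

lemma chainSum_snoc {u : ℝ} {m : ℕ → ℂ} {n n' : ℕ} {x : ℝ} (h : chainSum u m n x)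
    (hn : n < n') : chainSum u m n' (x + ‖m n' - m n‖ ^ u) := by
  obtain ⟨N, j, hj, hl, rfl⟩ := h
  refine ⟨N + 1, Fin.snoc (α := fun _ => ℕ) j n', ?_, by simp, ?_⟩
  · rw [Fin.strictMono_iff_lt_succ]
    intro i
    induction i using Fin.lastCases with
    | last => simp [hl, hn]
    | cast i =>
      rw [Fin.succ_castSucc, Fin.snoc_castSucc, Fin.snoc_castSucc]
      exact hj Fin.castSucc_lt_succ
  · rw [Fin.sum_univ_castSucc]
    congr 1
    · refine Finset.sum_congr rfl fun i _ => ?_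
      rw [Fin.succ_castSucc, Fin.snoc_castSucc, Fin.snoc_castSucc]
    · simp [hl]

lemma chainSum_le_one {u : ℝ} (hu : 1 ≤ u) {m : ℕ → ℂ} (hm : eVnorm u m ≤ 1) {n : ℕ} {x : ℝ}
    (h : chainSum u m n x) : x ≤ 1 := by
  obtain ⟨N, j, hj, hl, rfl⟩ := h
  have h1 : eVar u m ≤ 1 := le_trans le_add_self hm
  have h2 : (∑ i : Fin N, (ENNReal.ofReal ‖m (j i.succ) - m (j i.castSucc)‖) ^ u) ^ (1 / u) ≤ 1 := by
    refine le_trans ?_ h1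
    unfold eVar
    exact le_iSup_of_le N (le_iSup_of_le j (le_iSup_of_le hj le_rfl))
  have hu0 : 0 < 1 / u := by positivity
  have h3 : (∑ i : Fin N, (ENNReal.ofReal ‖m (j i.succ) - m (j i.castSucc)‖) ^ u) ≤ 1 := by
    by_contra hc
    exact absurd h2 (not_le.2 (ENNReal.one_lt_rpow (not_le.1 hc) hu0))
  have h4 : ∀ i : Fin N, (ENNReal.ofReal ‖m (j i.succ) - m (j i.castSucc)‖) ^ u
      = ENNReal.ofReal (‖m (j i.succ) - m (j i.castSucc)‖ ^ u) := fun i =>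
    ENNReal.ofReal_rpow_of_nonneg (norm_nonneg _) (by linarith)
  simp_rw [h4] at h3
  rw [← ENNReal.ofReal_sum_of_nonneg (fun i _ => by positivity)] at h3
  rwa [ENNReal.ofReal_le_one] at h3

lemma exists_var {u : ℝ} (hu : 1 ≤ u) {m : ℕ → ℂ} (hm : eVnorm u m ≤ 1) :
    ∃ v : ℕ → ℝ, (∀ n, 0 ≤ v n) ∧ (∀ n, v n ≤ 1) ∧ Monotone v ∧
      ∀ a b, ‖m a - m b‖ ^ u ≤ |v a - v b| := by
  have bdd : ∀ n, BddAbove {x | chainSum u m n x} := fun n =>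
    ⟨1, fun x hx => chainSum_le_one hu hm hx⟩
  have key : ∀ a b, a < b → sSup {x | chainSum u m a x} + ‖m b - m a‖ ^ u
      ≤ sSup {x | chainSum u m b x} := by
    intro a b hab
    rw [← le_sub_iff_add_le]
    refine csSup_le ⟨0, chainSum_zero u m a⟩ fun x hx => ?_
    rw [le_sub_iff_add_le]
    exact le_csSup (bdd b) (chainSum_snoc hx hab)
  refine ⟨fun n => sSup {x | chainSum u m n x}, fun n => le_csSup (bdd n) (chainSum_zero u m n),
    fun n => csSup_le ⟨0, chainSum_zero u m n⟩ fun x hx => chainSum_le_one hu hm hx, ?_, ?_⟩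
  · intro a b hab
    rcases hab.eq_or_lt with rfl | h
    · exact le_rfl
    · have := key a b h
      have h2 : 0 ≤ ‖m b - m a‖ ^ u := by positivity
      simp only
      linarith
  · intro a b
    rcases lt_trichotomy a b with h | rfl | h
    · have := key a b h
      rw [norm_sub_rev, abs_sub_comm]
      exact le_trans (by simp only; linarith) (le_abs_self _)
    · simp [Real.zero_rpow (by linarith : u ≠ 0)]
    · have := key b a h
      exact le_trans (by simp only; linarith) (le_abs_self _)

lemma memru_of_levels {p b : ℝ} (hp : 0 < p) (hb : 0 ≤ b) {g : ℕ → ℂ} {f : ℕ → ℕ} (L : ℕ)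
    (hf : Monotone f) (hL : ∀ n, f n < L) (hg : ∀ n k, f n = f k → g n = g k)
    (hgb : ∀ n, ‖g n‖ ≤ b) (hLb : L * b ^ p ≤ 1) : memru p g := by
  classical
  let a : ℕ → ℂ := fun ν => if ∃ n, f n = ν then g (Function.invFun f ν) else 0
  have ha : ∀ n, a (f n) = g n := fun n => by
    have h : ∃ k, f k = f n := ⟨n, rfl⟩
    simp only [a, if_pos h]
    exact hg _ _ (Function.invFun_eq h)
  have hab : ∀ ν, ‖a ν‖ ≤ b := fun ν => by
    simp only [a]
    split_ifs
    · exact hgb _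
    · simpa using hb
  have ha0 : ∀ ν ∉ Finset.range L, ‖a ν‖ ^ p = 0 := fun ν hν => by
    have : ¬ ∃ n, f n = ν := by
      rintro ⟨n, rfl⟩
      exact hν (Finset.mem_range.2 (hL n))
    simp [a, this, Real.zero_rpow hp.ne']
  refine ⟨fun ν => f ⁻¹' {ν}, a, fun ν => ?_, ?_, summable_of_ne_finset_zero ha0, ?_, ?_⟩
  · refine ⟨fun x hx y hy z hz => ?_⟩
    simp only [Set.mem_preimage, Set.mem_singleton_iff] at *
    have h1 := hf hz.1
    have h2 := hf hz.2
    omega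
  · intro i k hik
    simp only [Function.onFun]
    rw [Set.disjoint_left]
    intro x hx hy
    simp only [Set.mem_preimage, Set.mem_singleton_iff] at *
    exact hik (hx.symm.trans hy)
  · refine Real.rpow_le_one (tsum_nonneg fun _ => by positivity) ?_ (by positivity)
    rw [tsum_eq_sum ha0]
    refine le_trans (Finset.sum_le_sum (g := fun _ => b ^ p) fun ν _ => ?_) (by simpa using hLb)
    exact Real.rpow_le_rpow (norm_nonneg _) (hab ν) hp.le
  · intro n
    rw [tsum_eq_single (f n)]
    · simp [ha]
    · intro ν hν
      simp [Set.indicator, hν.symm]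

/-- Dyadic level of the variation function. -/
noncomputable def lev (v : ℕ → ℝ) (j n : ℕ) : ℕ := ⌊(2:ℝ) ^ j * v n⌋₊

/-- First point of the level set. -/
noncomputable def rep (v : ℕ → ℝ) (j n : ℕ) : ℕ := sInf {k | lev v j k = lev v j n}

lemma lev_rep (v : ℕ → ℝ) (j n : ℕ) : lev v j (rep v j n) = lev v j n :=
  Nat.sInf_mem (s := {k | lev v j k = lev v j n}) ⟨n, rfl⟩

lemma rep_congr {v : ℕ → ℝ} {j n k : ℕ} (h : lev v j n = lev v j k) :
    rep v j n = rep v j k := by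
  unfold rep; rw [h]

lemma lev_succ (v : ℕ → ℝ) (j n : ℕ) : lev v j n = lev v (j + 1) n / 2 := by
  unfold lev
  rw [← Nat.floor_div_ofNat]
  congr 1
  rw [pow_succ]
  ring

lemma lev_dist {u : ℝ} (hu : 1 ≤ u) {m : ℕ → ℂ} {v : ℕ → ℝ} (h0 : ∀ n, 0 ≤ v n)
    (hv : ∀ a b, ‖m a - m b‖ ^ u ≤ |v a - v b|) {j a b : ℕ} (h : lev v j a = lev v j b) :
    ‖m a - m b‖ ≤ (2:ℝ) ^ (-(j:ℝ) / u) := by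
  have hpos : (0:ℝ) < 2 ^ j := by positivity
  have e1 := Nat.floor_le (mul_nonneg hpos.le (h0 a))
  have e2 := Nat.lt_floor_add_one ((2:ℝ) ^ j * v a)
  have e3 := Nat.floor_le (mul_nonneg hpos.le (h0 b))
  have e4 := Nat.lt_floor_add_one ((2:ℝ) ^ j * v b)
  unfold lev at h
  rw [h] at e1 e2
  have h1 : |v a - v b| ≤ (2:ℝ) ^ (-(j:ℝ)) := by
    rw [Real.rpow_neg (by norm_num), Real.rpow_natCast, ← one_div, le_div_iff₀ hpos, ← abs_of_pos hpos,
      ← abs_mul, abs_le]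
    constructor <;> nlinarith
  have h2 := (hv a b).trans h1
  have hu0 : 0 < u := by linarith
  calc ‖m a - m b‖ = (‖m a - m b‖ ^ u) ^ (1 / u) := by
        rw [← Real.rpow_mul (norm_nonneg _), mul_one_div_cancel hu0.ne', Real.rpow_one]
    _ ≤ ((2:ℝ) ^ (-(j:ℝ))) ^ (1 / u) :=
        Real.rpow_le_rpow (by positivity) h2 (by positivity)
    _ = _ := by
        rw [← Real.rpow_mul (by norm_num)]; congr 1; ring

/-- The martingale-type differences. -/
noncomputable def dif (m : ℕ → ℂ) (v : ℕ → ℝ) : ℕ → ℕ → ℂ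
  | 0, n => m (rep v 0 n)
  | j + 1, n => m (rep v (j + 1) n) - m (rep v j n)

lemma dif_sum (m : ℕ → ℂ) (v : ℕ → ℝ) (k n : ℕ) :
    ∑ j ∈ Finset.range (k + 1), dif m v j n = m (rep v k n) := by
  induction k with
  | zero => simp [dif]
  | succ k ih => rw [Finset.sum_range_succ, ih]; simp [dif]

lemma dif_congr (m : ℕ → ℂ) (v : ℕ → ℝ) (j n k : ℕ) (h : lev v j n = lev v j k) :
    dif m v j n = dif m v j k := by
  cases j with
  | zero => simp only [dif, rep_congr h]
  | succ j =>
    have h' : lev v j n = lev v j k := by rw [lev_succ, lev_succ v j k, h]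
    simp only [dif, rep_congr h, rep_congr h']

lemma dif_bound {u : ℝ} (hu : 1 ≤ u) {m : ℕ → ℂ} {v : ℕ → ℝ} (hm : ∀ n, ‖m n‖ ≤ 1)
    (h0 : ∀ n, 0 ≤ v n)
    (hv : ∀ a b, ‖m a - m b‖ ^ u ≤ |v a - v b|) (j n : ℕ) :
    ‖dif m v j n‖ ≤ 2 * (2:ℝ) ^ (-(j:ℝ) / u) := by
  cases j with
  | zero => simp [dif]; linarith [hm (rep v 0 n)]
  | succ j =>
    have h1 : lev v j (rep v (j + 1) n) = lev v j (rep v j n) := by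
      rw [lev_rep, lev_succ, lev_rep, ← lev_succ]
    refine (lev_dist hu h0 hv h1).trans ?_
    have hu0 : 0 < u := by linarith
    have : (2:ℝ) * (2:ℝ) ^ (-((j + 1 : ℕ):ℝ) / u) = 2 ^ (1 + -((j + 1 : ℕ):ℝ) / u) := by
      rw [Real.rpow_add (by norm_num), Real.rpow_one]
    rw [this]
    refine Real.rpow_le_rpow_of_exponent_le (by norm_num) ?_
    push_cast
    have : 1 / u ≤ 1 := by rw [div_le_one hu0]; exact hu
    have e : -((j:ℝ) + 1) / u = -(j:ℝ) / u - 1 / u := by ring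
    rw [e]; linarith

lemma summable_two_rpow {s : ℝ} (hs : 0 < s) : Summable fun j : ℕ => (2:ℝ) ^ (-(j:ℝ) * s) := by
  have : (fun j : ℕ => (2:ℝ) ^ (-(j:ℝ) * s)) = fun j : ℕ => ((2:ℝ) ^ (-s)) ^ j := by
    funext j
    rw [← Real.rpow_natCast, ← Real.rpow_mul (by norm_num)]
    congr 1; ring
  rw [this]
  exact summable_geometric_of_lt_one (by positivity)
    (Real.rpow_lt_one_of_one_lt_of_neg (by norm_num) (by linarith))

/-- Let `u ≥ 1`, `ε > 0` and `m : ℕ → ℂ` with `‖m‖_{V_u} ≤ 1`. Then there exist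
`δ > 0` and `C > 0` depending only on `u` and `ε`, coefficients `(c j)` with
`|c j| ≤ C · 2^{-jδ}`, and sequences `m_j ∈ r_{u+ε}`, with
`m n = Σ_{j=0}^∞ c_j m_j(n)` for every `n`; in particular
`Σ_j |c_j|^σ < ∞` for every `σ > 0`. -/
theorem haar_stmt12 (u ε : ℝ) (hu : 1 ≤ u) (hε : 0 < ε) :
    ∃ δ : ℝ, 0 < δ ∧ ∃ C : ℝ, 0 < C ∧
      ∀ m : ℕ → ℂ, eVnorm u m ≤ 1 →
        ∃ (c : ℕ → ℂ) (g : ℕ → ℕ → ℂ),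
          (∀ j : ℕ, ‖c j‖ ≤ C * (2:ℝ) ^ (-(j : ℝ) * δ)) ∧
          (∀ j : ℕ, memru (u + ε) (g j)) ∧
          (∀ n : ℕ, HasSum (fun j => c j * g j n) (m n)) ∧
          (∀ σ : ℝ, 0 < σ → Summable fun j => ‖c j‖ ^ σ) := by
  have hu0 : 0 < u := by linarith
  have hp : 0 < u + ε := by linarith
  have hδ : 0 < 1 / u - 1 / (u + ε) :=
    sub_pos.2 (one_div_lt_one_div_of_lt hu0 (by linarith))
  set δ := 1 / u - 1 / (u + ε) with hδd
  have hC : 0 < 2 * (2:ℝ) ^ (1 / (u + ε)) := by positivity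
  set C := 2 * (2:ℝ) ^ (1 / (u + ε)) with hCd
  refine ⟨δ, hδ, C, hC, fun m hm => ?_⟩
  obtain ⟨v, h0, h1, hmono, hv⟩ := exists_var hu hm
  have hm1 : ∀ n, ‖m n‖ ≤ 1 := fun n => by
    have : ENNReal.ofReal ‖m n‖ ≤ 1 :=
      (le_iSup (fun j => ENNReal.ofReal ‖m j‖) n).trans (le_trans le_self_add hm)
    rwa [ENNReal.ofReal_le_one] at this
  let r : ℕ → ℝ := fun j => C * (2:ℝ) ^ (-(j : ℝ) * δ)
  have hr : ∀ j, 0 < r j := fun j => by positivity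
  have hnorm : ∀ j, ‖((r j : ℝ) : ℂ)‖ = r j := fun j => by
    rw [Complex.norm_real, Real.norm_of_nonneg (hr j).le]
  have hdb := dif_bound hu hm1 h0 hv
  refine ⟨fun j => (r j : ℂ), fun j n => dif m v j n / (r j : ℂ), fun j => (hnorm j).le,
    fun j => ?_, fun n => ?_, fun σ hσ => ?_⟩
  · refine memru_of_levels (f := lev v j) (b := (2 * (2:ℝ) ^ (-(j:ℝ) / u)) / r j) hp
      (div_nonneg (by positivity) (hr j).le) (2 ^ j + 1)
      ?_ ?_ ?_ ?_ ?_
    · intro a b hab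
      exact Nat.floor_mono (mul_le_mul_of_nonneg_left (hmono hab) (by positivity))
    · intro n
      refine Nat.lt_succ_of_le (Nat.floor_le_of_le ?_)
      push_cast
      exact mul_le_of_le_one_right (by positivity) (h1 n)
    · intro n k h
      simp only [dif_congr m v j n k h]
    · intro n
      rw [norm_div, hnorm]
      exact div_le_div_of_nonneg_right (hdb j n) (hr j).le
    · have e : (2 * (2:ℝ) ^ (-(j:ℝ) / u)) / r j = 2 ^ (-((j:ℝ) + 1) / (u + ε)) := by
        rw [div_eq_iff (hr j).ne']
        simp only [r, hCd]
        rw [mul_left_comm, mul_assoc 2, ← Real.rpow_add (by norm_num), ← Real.rpow_add (by norm_num)]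
        congr 2
        rw [hδd]; ring
      rw [e, ← Real.rpow_mul (by norm_num), div_mul_cancel₀ _ hp.ne', Real.rpow_neg (by norm_num),
        ← div_eq_mul_inv, div_le_one (by positivity)]
      rw [Real.rpow_add (by norm_num), Real.rpow_natCast, Real.rpow_one]
      push_cast
      have : (1:ℝ) ≤ 2 ^ j := one_le_pow₀ (by norm_num)
      linarith
  · have e : (fun j => (r j : ℂ) * (dif m v j n / (r j : ℂ))) = fun j => dif m v j n := by
      funext j
      have : (r j : ℂ) ≠ 0 := by exact_mod_cast (hr j).ne'
      field_simp
    rw [e]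
    have hs := summable_two_rpow (s := 1 / u) (by positivity)
    have e2 : (fun j : ℕ => (2:ℝ) ^ (-(j:ℝ) * (1 / u))) = fun j : ℕ => (2:ℝ) ^ (-(j:ℝ) / u) := by
      funext j; congr 1; ring
    rw [e2] at hs
    have hsum : Summable fun j => ‖dif m v j n‖ :=
      Summable.of_nonneg_of_le (fun _ => norm_nonneg _) (fun j => hdb j n) (hs.mul_left 2)
    rw [hasSum_iff_tendsto_nat_of_summable_norm hsum, ← Filter.tendsto_add_atTop_iff_nat 1]
    simp_rw [dif_sum]
    rw [tendsto_iff_norm_sub_tendsto_zero]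
    exact squeeze_zero (fun _ => norm_nonneg _)
      (fun k => lev_dist hu h0 hv (lev_rep v k n)) hs.tendsto_atTop_zero
  · have e : (fun j : ℕ => ‖(r j : ℂ)‖ ^ σ) = fun j : ℕ => C ^ σ * (2:ℝ) ^ (-(j:ℝ) * (δ * σ)) := by
      funext j
      rw [hnorm]
      simp only [r]
      rw [Real.mul_rpow hC.le (by positivity), ← Real.rpow_mul (by norm_num), mul_assoc]
    rw [e]
    exact (summable_two_rpow (by positivity)).mul_left _
end

section
/- Let α > 0 and 1 ≤ u < ∞, and define the alternating sequence M(n) = (−1)^n (n+1)^{−α}. Then 𝒱_u(M) < ∞ if and only if α > 1/u. -/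
open scoped ENNReal

theorem aux_sum (α u : ℝ) (hu : 1 ≤ u) :
    (∑' n : ℕ, (ENNReal.ofReal (((n : ℝ) + 1) ^ (-α))) ^ u) < ∞ ↔ 1 / u < α := by
  have hu0 : 0 < u := by linarith
  have h1 : ∀ n : ℕ, (ENNReal.ofReal (((n : ℝ) + 1) ^ (-α))) ^ u
      = ENNReal.ofReal (((n + 1 : ℕ) : ℝ) ^ (-(α * u))) := by
    intro n
    have hn : (0 : ℝ) < (n : ℝ) + 1 := by positivity
    rw [ENNReal.ofReal_rpow_of_nonneg (by positivity) hu0.le, ← Real.rpow_mul hn.le]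
    push_cast
    ring_nf
  have h2 : Summable (fun n : ℕ => ((n + 1 : ℕ) : ℝ) ^ (-(α * u))) ↔ 1 / u < α := by
    rw [summable_nat_add_iff (f := fun n : ℕ => (n : ℝ) ^ (-(α * u))) 1,
      Real.summable_nat_rpow, div_lt_iff₀ hu0]
    constructor <;> intro h <;> linarith
  simp_rw [h1]
  rw [← h2]
  constructor
  · intro h
    have := ENNReal.summable_toReal h.ne
    refine this.congr fun n => ?_
    rw [ENNReal.toReal_ofReal (by positivity)]
  · intro h
    exact h.tsum_ofReal_lt_top

/-- For `α > 0` and `1 ≤ u < ∞`, the alternating sequence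
`M n = (-1)^n (n+1)^{-α}` has `𝒱_u(M) < ∞` if and only if `α > 1/u`. -/
theorem haar_stmt14 (α u : ℝ) (hα : 0 < α) (hu : 1 ≤ u) (M : ℕ → ℂ)
    (hM : ∀ n : ℕ, M n = (-1 : ℂ) ^ n * (((((n : ℝ) + 1) ^ (-α) : ℝ)) : ℂ)) :
    eVar u M < ∞ ↔ 1 / u < α := by
  have hu0 : 0 < u := by linarith
  have hnorm : ∀ n : ℕ, ‖M n‖ = ((n : ℝ) + 1) ^ (-α) := by
    intro n
    have : (0 : ℝ) ≤ ((n : ℝ) + 1) ^ (-α) := by positivity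
    rw [hM, norm_mul, norm_pow, norm_neg, norm_one, one_pow, one_mul, Complex.norm_real,
      Real.norm_of_nonneg this]
  rw [← aux_sum α u hu]
  constructor
  · intro h
    refine lt_of_le_of_lt ?_ (ENNReal.rpow_lt_top_of_nonneg hu0.le h.ne)
    refine ENNReal.tsum_le_of_sum_range_le fun N => ?_
    have hle : (∑ i : Fin N, (ENNReal.ofReal ‖M ((fun k : Fin (N + 1) => (k : ℕ)) i.succ)
        - M ((fun k : Fin (N + 1) => (k : ℕ)) i.castSucc)‖) ^ u) ^ (1 / u) ≤ eVar u M := by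
      unfold eVar
      exact le_iSup_of_le N (le_iSup_of_le (fun k : Fin (N + 1) => (k : ℕ))
        (le_iSup_of_le (fun a b hab => hab) le_rfl))
    rw [one_div, ENNReal.rpow_inv_le_iff hu0] at hle
    refine le_trans ?_ hle
    rw [Finset.sum_range]
    refine Finset.sum_le_sum fun i _ => ?_
    refine ENNReal.rpow_le_rpow (ENNReal.ofReal_le_ofReal ?_) hu0.le
    simp only [Fin.val_succ, Fin.val_castSucc]
    have hd : M ((i : ℕ) + 1) - M i = (-1 : ℂ) ^ ((i : ℕ) + 1) *
        ((((((i : ℕ) + 1 : ℕ) : ℝ) + 1) ^ (-α) + (((i : ℕ) : ℝ) + 1) ^ (-α) : ℝ) : ℂ) := by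
      rw [hM, hM, Complex.ofReal_add]
      ring
    have hp : (0 : ℝ) ≤ ((((i : ℕ) + 1 : ℕ) : ℝ) + 1) ^ (-α) := by positivity
    have hq : (0 : ℝ) ≤ (((i : ℕ) : ℝ) + 1) ^ (-α) := by positivity
    rw [hd, norm_mul, norm_pow, norm_neg, norm_one, one_pow, one_mul, Complex.norm_real,
      Real.norm_of_nonneg (add_nonneg hp hq)]
    linarith
  · intro h
    set S := ∑' n : ℕ, (ENNReal.ofReal (((n : ℝ) + 1) ^ (-α))) ^ u with hS
    have hfin : ((2 : ℝ≥0∞) ^ u * S) ^ (1 / u) < ∞ :=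
      ENNReal.rpow_lt_top_of_nonneg (by positivity)
        (ENNReal.mul_lt_top (ENNReal.rpow_lt_top_of_nonneg hu0.le (by simp)) h).ne
    refine lt_of_le_of_lt ?_ hfin
    unfold eVar
    refine iSup_le fun N => iSup_le fun j => iSup_le fun hj => ?_
    refine ENNReal.rpow_le_rpow ?_ (by positivity)
    have hinj : Function.Injective (fun i : Fin N => j i.castSucc) :=
      hj.injective.comp (Fin.castSucc_injective N)
    calc ∑ i : Fin N, (ENNReal.ofReal ‖M (j i.succ) - M (j i.castSucc)‖) ^ u
        ≤ ∑ i : Fin N, (2 : ℝ≥0∞) ^ u *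
          (ENNReal.ofReal (((j i.castSucc : ℕ) + 1 : ℝ) ^ (-α))) ^ u := by
          refine Finset.sum_le_sum fun i _ => ?_
          rw [← ENNReal.mul_rpow_of_nonneg _ _ hu0.le]
          refine ENNReal.rpow_le_rpow ?_ hu0.le
          have h2 : (2 : ℝ≥0∞) = ENNReal.ofReal 2 := by simp
          rw [h2, ← ENNReal.ofReal_mul (by norm_num)]
          refine ENNReal.ofReal_le_ofReal ?_
          refine (norm_sub_le _ _).trans ?_
          rw [hnorm, hnorm]
          have hlt : j i.castSucc ≤ j i.succ := (hj (Fin.castSucc_lt_succ)).le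
          have : ((j i.succ : ℝ) + 1) ^ (-α) ≤ ((j i.castSucc : ℝ) + 1) ^ (-α) := by
            refine Real.rpow_le_rpow_of_nonpos (by positivity) ?_ (by linarith)
            have : (j i.castSucc : ℝ) ≤ j i.succ := by exact_mod_cast hlt
            linarith
          linarith
      _ = (2 : ℝ≥0∞) ^ u * ∑' i : Fin N,
          (ENNReal.ofReal (((j i.castSucc : ℕ) + 1 : ℝ) ^ (-α))) ^ u := by
          rw [← Finset.mul_sum, tsum_fintype]
      _ ≤ (2 : ℝ≥0∞) ^ u * S := by
          gcongr
          exact ENNReal.tsum_comp_le_tsum_of_injective hinj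
            (fun n : ℕ => (ENNReal.ofReal (((n : ℝ) + 1) ^ (-α))) ^ u)
end

section
/- Let f : ℝ → ℂ be locally integrable and j ≥ 0. Then for every x ∈ ℝ, Σ_{μ ∈ ℤ} 2^j (∫_ℝ f(y) h_{j,μ}(y) dy) h_{j,μ}(x) = 𝔼_{j+1} f(x) − 𝔼_j f(x), where for each fixed x at most one term of the sum on the left is nonzero. -/
open MeasureTheory

/-- The Haar function `h_{j,μ}(x) = h(2^j x - μ)` on `ℝ`, where
`h = 1_{[0,1/2)} - 1_{[1/2,1)}`. -/
noncomputable def haarR (j : ℕ) (μ : ℤ) : ℝ → ℝ := fun x =>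
  Set.indicator (Set.Ico (0 : ℝ) (1 / 2)) (fun _ => (1 : ℝ)) ((2:ℝ) ^ j * x - μ)
  - Set.indicator (Set.Ico (1 / 2 : ℝ) 1) (fun _ => (1 : ℝ)) ((2:ℝ) ^ j * x - μ)

/-- The conditional expectation
`𝔼_j f x = Σ_{μ∈ℤ} 1_{I_{j,μ}}(x) · 2^j ∫_{I_{j,μ}} f(y) dy` associated with the
dyadic intervals `I_{j,μ} = [μ 2^{-j}, (μ+1) 2^{-j})`. -/
noncomputable def dyadicExp (j : ℕ) (f : ℝ → ℂ) (x : ℝ) : ℂ :=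
  ∑' μ : ℤ, Set.indicator
    (Set.Ico ((μ : ℝ) * ((2:ℝ) ^ j)⁻¹) (((μ : ℝ) + 1) * ((2:ℝ) ^ j)⁻¹))
    (fun _ => (2 ^ j : ℂ) *
      ∫ y in Set.Ico ((μ : ℝ) * ((2:ℝ) ^ j)⁻¹) (((μ : ℝ) + 1) * ((2:ℝ) ^ j)⁻¹), f y) x

/-- The dyadic interval `I_{j,μ}`. -/
def dyI (j : ℕ) (μ : ℤ) : Set ℝ :=
  Set.Ico ((μ : ℝ) * ((2:ℝ) ^ j)⁻¹) (((μ : ℝ) + 1) * ((2:ℝ) ^ j)⁻¹)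

lemma mem_dyI (j : ℕ) (μ : ℤ) (x : ℝ) : x ∈ dyI j μ ↔ ⌊(2:ℝ) ^ j * x⌋ = μ := by
  have h : (0:ℝ) < 2 ^ j := by positivity
  rw [dyI, Set.mem_Ico, Int.floor_eq_iff, ← div_eq_mul_inv, ← div_eq_mul_inv, div_le_iff₀ h,
    lt_div_iff₀ h, mul_comm x]

lemma dyadicExp_eq (j : ℕ) (f : ℝ → ℂ) (x : ℝ) :
    dyadicExp j f x = (2 ^ j : ℂ) * ∫ y in dyI j ⌊(2:ℝ) ^ j * x⌋, f y := by
  unfold dyadicExp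
  rw [tsum_eq_single ⌊(2:ℝ) ^ j * x⌋]
  · exact Set.indicator_of_mem ((mem_dyI j _ x).2 rfl) _
  · intro μ hμ
    exact Set.indicator_of_notMem (fun h => hμ ((mem_dyI j μ x).1 h).symm) _

lemma mem_even (j : ℕ) (μ : ℤ) (x : ℝ) :
    x ∈ dyI (j + 1) (2 * μ) ↔ (2:ℝ) ^ j * x - μ ∈ Set.Ico (0 : ℝ) (1 / 2) := by
  rw [mem_dyI, Int.floor_eq_iff, Set.mem_Ico, pow_succ]
  push_cast
  constructor <;> rintro ⟨h1, h2⟩ <;> constructor <;> linarith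

lemma mem_odd (j : ℕ) (μ : ℤ) (x : ℝ) :
    x ∈ dyI (j + 1) (2 * μ + 1) ↔ (2:ℝ) ^ j * x - μ ∈ Set.Ico (1 / 2 : ℝ) 1 := by
  rw [mem_dyI, Int.floor_eq_iff, Set.mem_Ico, pow_succ]
  push_cast
  constructor <;> rintro ⟨h1, h2⟩ <;> constructor <;> linarith

lemma haarR_eq (j : ℕ) (μ : ℤ) (x : ℝ) :
    haarR j μ x = (dyI (j + 1) (2 * μ)).indicator (fun _ => (1:ℝ)) x
      - (dyI (j + 1) (2 * μ + 1)).indicator (fun _ => (1:ℝ)) x := by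
  classical
  simp only [haarR, Set.indicator_apply, mem_even, mem_odd]

lemma dyI_split (j : ℕ) (μ : ℤ) :
    dyI j μ = dyI (j + 1) (2 * μ) ∪ dyI (j + 1) (2 * μ + 1) := by
  ext x
  rw [Set.mem_union, mem_even, mem_odd, mem_dyI, Int.floor_eq_iff, Set.mem_Ico, Set.mem_Ico]
  constructor
  · rintro ⟨h1, h2⟩
    rcases lt_or_ge ((2:ℝ) ^ j * x - μ) (1 / 2) with h | h
    · left; constructor <;> linarith
    · right; constructor <;> linarith
  · rintro (⟨h1, h2⟩ | ⟨h1, h2⟩) <;> constructor <;> linarith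

lemma dyI_disj (j : ℕ) {μ ν : ℤ} (h : μ ≠ ν) : Disjoint (dyI j μ) (dyI j ν) := by
  rw [Set.disjoint_left]
  intro x h1 h2
  exact h (((mem_dyI _ _ _).1 h1).symm.trans ((mem_dyI _ _ _).1 h2))

lemma dyI_meas (j : ℕ) (μ : ℤ) : MeasurableSet (dyI j μ) := measurableSet_Ico

lemma dyI_int (f : ℝ → ℂ) (hf : LocallyIntegrable f) (j : ℕ) (μ : ℤ) :
    IntegrableOn f (dyI j μ) :=
  (hf.integrableOn_isCompact isCompact_Icc).mono_set Set.Ico_subset_Icc_self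

lemma haar_integral (f : ℝ → ℂ) (hf : LocallyIntegrable f) (j : ℕ) (μ : ℤ) :
    ∫ y, haarR j μ y • f y
      = (∫ y in dyI (j + 1) (2 * μ), f y) - ∫ y in dyI (j + 1) (2 * μ + 1), f y := by
  rw [← integral_indicator (dyI_meas _ _), ← integral_indicator (dyI_meas _ _),
    ← integral_sub ((dyI_int f hf _ _).integrable_indicator (dyI_meas _ _))
      ((dyI_int f hf _ _).integrable_indicator (dyI_meas _ _))]
  congr 1
  ext y
  classical
  rw [haarR_eq, sub_smul]
  simp only [Set.indicator_apply, ite_smul, one_smul, zero_smul]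

lemma haarR_zero (j : ℕ) (μ : ℤ) (x : ℝ) (h : μ ≠ ⌊(2:ℝ) ^ j * x⌋) : haarR j μ x = 0 := by
  have h0 : x ∉ dyI j μ := fun hx => h ((mem_dyI j μ x).1 hx).symm
  rw [dyI_split, Set.mem_union, not_or] at h0
  rw [haarR_eq, Set.indicator_of_notMem h0.1, Set.indicator_of_notMem h0.2, sub_zero]

/-- For locally integrable `f : ℝ → ℂ`, `j ≥ 0` and every `x ∈ ℝ`,
`Σ_{μ∈ℤ} 2^j (∫ f h_{j,μ}) h_{j,μ}(x) = 𝔼_{j+1} f(x) - 𝔼_j f(x)`, where for each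
fixed `x` at most one term of the sum is nonzero. -/
theorem haar_stmt15 (f : ℝ → ℂ) (hf : LocallyIntegrable f) (j : ℕ) :
    ∀ x : ℝ,
      (∑' μ : ℤ, (2 ^ j : ℂ) * (∫ y, haarR j μ y • f y) * ((haarR j μ x : ℝ) : ℂ))
          = dyadicExp (j + 1) f x - dyadicExp j f x ∧
      {μ : ℤ | (2 ^ j : ℂ) * (∫ y, haarR j μ y • f y) * ((haarR j μ x : ℝ) : ℂ)
          ≠ 0}.Subsingleton := by
  intro x
  constructor
  · rw [tsum_eq_single ⌊(2:ℝ) ^ j * x⌋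
      (fun μ hμ => by rw [haarR_zero j μ x hμ]; simp), dyadicExp_eq, dyadicExp_eq,
      haar_integral f hf]
    have hx : x ∈ dyI j ⌊(2:ℝ) ^ j * x⌋ := (mem_dyI _ _ _).2 rfl
    generalize ⌊(2:ℝ) ^ j * x⌋ = m at hx ⊢
    have hd : Disjoint (dyI (j + 1) (2 * m)) (dyI (j + 1) (2 * m + 1)) :=
      dyI_disj _ (by omega)
    have hs : ∫ y in dyI j m, f y = (∫ y in dyI (j + 1) (2 * m), f y)
        + ∫ y in dyI (j + 1) (2 * m + 1), f y := by
      rw [dyI_split, setIntegral_union hd (dyI_meas _ _) (dyI_int f hf _ _) (dyI_int f hf _ _)]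
    rw [hs, haarR_eq]
    rw [dyI_split] at hx
    rcases hx with hx | hx
    · rw [(mem_dyI _ _ _).1 hx, Set.indicator_of_mem hx,
        Set.indicator_of_notMem (Set.disjoint_left.1 hd hx)]
      push_cast
      ring
    · rw [(mem_dyI _ _ _).1 hx, Set.indicator_of_mem hx,
        Set.indicator_of_notMem (Set.disjoint_right.1 hd hx)]
      push_cast
      ring
  · have key : ∀ μ : ℤ, (2 ^ j : ℂ) * (∫ y, haarR j μ y • f y) * ((haarR j μ x : ℝ) : ℂ) ≠ 0 →
        μ = ⌊(2:ℝ) ^ j * x⌋ := by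
      intro μ h
      by_contra hne
      exact h (by rw [haarR_zero j μ x hne]; simp)
    intro a ha b hb
    exact (key a ha).trans (key b hb).symm
end
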